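/- arXiv:2112.06526 — 2 statements merged into one kernel-verified Lean document; each statement's English description precedes it below -/
import Mathlib

section
/- Fix λ > 0, set p_n = λ/n, and fix a > 0. There exists a constant C' > 0 such that for every δ > 0 and all sequences (k_n), (w_n) of positive reals with w_n → 0, (log n)/(w_n² k_n^{1/3}) → 0 and (log w_n)/log(1/p_n) → 0, there exist a constant C > 0 and n₀ such that for all n ≥ n₀: P(G_{n,p_n} contains no (C(ψ_n + w_n), m_n)-near-clique | T ≥ a k_n) ≤ δ, where ψ_n := C' (log n)/(w_n² k_n^{1/3}) + log(C' w_n^{−5} (log(1/p_n))³)/log(1/p_n) and m_n := (1/2)·[6(a − 2w_n) k_n (1 − C k_n^{−1/3})]^{2/3}. -/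
open scoped BigOperators Classical
open Finset Filter

noncomputable section

/-- Number of edges of a finite simple graph. -/
def edgeCount {V : Type*} [Fintype V] (G : SimpleGraph V) : ℕ :=
  (Finset.univ.filter (fun e : Sym2 V => e ∈ G.edgeSet)).card

/-- Number of triangles (3-cliques) of a finite simple graph. -/
def triangleCount {V : Type*} [Fintype V] (G : SimpleGraph V) : ℕ :=
  (Finset.univ.filter (fun s : Finset V => G.IsNClique 3 s)).card

/-- Number of vertices lying in at least one triangle. -/
def vT {V : Type*} [Fintype V] (G : SimpleGraph V) : ℕ :=
  (Finset.univ.filter (fun v : V => ∃ u w : V, G.Adj v u ∧ G.Adj v w ∧ G.Adj u w)).card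

/-- Degree of a vertex. -/
def deg {V : Type*} [Fintype V] (G : SimpleGraph V) (v : V) : ℕ :=
  (Finset.univ.filter (fun u => G.Adj v u)).card

/-- Probability that the Erdős–Rényi random graph `G_{n,p}` equals the graph `G`. -/
def graphProb (n : ℕ) (p : ℝ) (G : SimpleGraph (Fin n)) : ℝ :=
  p ^ edgeCount G * (1 - p) ^ (n.choose 2 - edgeCount G)

/-- Probability of an event under the Erdős–Rényi measure. -/
def prob (n : ℕ) (p : ℝ) (A : Set (SimpleGraph (Fin n))) : ℝ :=
  ∑ G : SimpleGraph (Fin n), if G ∈ A then graphProb n p G else 0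

/-- Conditional probability `P(A | B)` (with the convention `0` when `P(B) = 0`). -/
def condProb (n : ℕ) (p : ℝ) (A B : Set (SimpleGraph (Fin n))) : ℝ :=
  prob n p (A ∩ B) / prob n p B

/-- Conditional expectation `E_G[f]` given that every edge of `G` is present. -/
def condExpect (n : ℕ) (p : ℝ) (G : SimpleGraph (Fin n)) (f : SimpleGraph (Fin n) → ℝ) : ℝ :=
  (∑ H : SimpleGraph (Fin n), if G ≤ H then graphProb n p H * f H else 0) /
    prob n p {H | G ≤ H}

/-- `E_G(T)`: conditional expectation of the number of triangles. -/
def condTri (n : ℕ) (p : ℝ) (G : SimpleGraph (Fin n)) : ℝ :=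
  condExpect n p G (fun H => (triangleCount H : ℝ))

/-- The variational quantity `Φ_{n,p,k}(a)`. -/
def Phi (n : ℕ) (p k a : ℝ) : ℝ :=
  sInf {x : ℝ | ∃ G : SimpleGraph (Fin n),
    a * k ≤ condTri n p G ∧ x = (edgeCount G : ℝ) * Real.log (1 / p)}

/-- A seed, with parameters `a, w, C, k` and edge probability `p`. -/
def IsSeed (n : ℕ) (p a w C k : ℝ) (G : SimpleGraph (Fin n)) : Prop :=
  (a - w) * k ≤ condTri n p G ∧
  (edgeCount G : ℝ) ≤ C * a * w⁻¹ * k ^ ((2 : ℝ) / 3) * Real.log (1 / p)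

/-- A core, with parameters `a, w, C, k` and edge probability `p`. -/
def IsCore (n : ℕ) (p a w C k : ℝ) (G : SimpleGraph (Fin n)) : Prop :=
  (a - 2 * w) * k ≤ condTri n p G ∧
  (edgeCount G : ℝ) ≤ C * a * w⁻¹ * k ^ ((2 : ℝ) / 3) * Real.log (1 / p) ∧
  ∀ e ∈ G.edgeSet,
    w ^ 2 * k ^ ((1 : ℝ) / 3) / (C * a * Real.log (1 / p)) ≤
      condTri n p G - condTri n p (G.deleteEdges {e})

/-- A `q`-basic graph. -/
def qBasic {V : Type*} [Fintype V] (q : ℕ) (G : SimpleGraph V) : Prop :=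
  vT G = q ∧ ∀ e ∈ G.edgeSet, vT (G.deleteEdges {e}) < q

/-- Containment of a `(δ, m)`-near-clique. -/
def containsNearClique {n : ℕ} (H : SimpleGraph (Fin n)) (δ m : ℝ) : Prop :=
  ∃ H' : SimpleGraph (Fin n), H' ≤ H ∧ 0 < edgeCount H' ∧
    ∀ v : Fin n, (∃ u, H'.Adj v u) →
      (1 - 4 * δ ^ ((1 : ℝ) / 2)) * (2 * m) ^ ((1 : ℝ) / 2) ≤ (deg H' v : ℝ)

/-- Partition function of the exponential random graph model tilted by `exp(b · V_T)`. -/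
def ergmZ (n : ℕ) (p b : ℝ) : ℝ :=
  ∑ G : SimpleGraph (Fin n), graphProb n p G * Real.exp (b * vT G)

/-- Probability of an event under the exponential random graph measure. -/
def ergmProb (n : ℕ) (p b : ℝ) (A : Set (SimpleGraph (Fin n))) : ℝ :=
  (∑ G : SimpleGraph (Fin n),
    if G ∈ A then graphProb n p G * Real.exp (b * vT G) else 0) / ergmZ n p b

/-!
Write `a * k = s ^ 3 / 6`, the number of triangles of a clique on `s` vertices, and `p = e ^ (-L)`.
A clique is present with probability about `e ^ (-L * s ^ 2 / 2)`, so conditionally on the upper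
tail event one may discard anything of much smaller probability.

* If no subgraph with `O(s ^ 2 * L / ω)` edges has `(1 - 2 * ω) * s ^ 3 / 6` triangles, then
  exposing triangles one at a time bounds the truncated moments of `T`, and by Markov's inequality
  `T ≥ s ^ 3 / 6` has probability at most `e ^ (-L * s ^ 2)`.
* Otherwise delete low-degree vertices from such a subgraph. What remains has large minimum degree,
  hence few vertices, so there are few candidates for it, and a union bound excludes those with at
  least `(1 + 4 * ε) * s ^ 2 / 2` edges.
* So some subgraph has almost as many triangles as a clique on `s` vertices and hardly more edges.
  By stability in the edge-triangle inequality `6 * T ≤ (2 * e) ^ (3 / 2)`, removing its vertices of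
  degree below `(1 - O(√ε)) * s` leaves at least one edge, and what is left is the near-clique.
-/

section Graph

variable {V : Type*} [Fintype V]

theorem edgeCount_eq_card_edgeFinset (G : SimpleGraph V) [Fintype G.edgeSet] :
    edgeCount G = #G.edgeFinset := by
  unfold edgeCount
  congr 1
  ext e
  simp

theorem deg_eq_degree (G : SimpleGraph V) (v : V) [Fintype (G.neighborSet v)] :
    deg G v = G.degree v := by
  rw [← SimpleGraph.card_neighborFinset_eq_degree]
  unfold deg
  congr 1
  ext u
  simp

theorem sum_deg (G : SimpleGraph V) : ∑ v, deg G v = 2 * edgeCount G := by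
  rw [edgeCount_eq_card_edgeFinset, ← SimpleGraph.sum_degrees_eq_twice_card_edges]
  exact sum_congr rfl fun v _ => deg_eq_degree G v

theorem deg_pos_iff_mem_support {G : SimpleGraph V} {v : V} : 0 < deg G v ↔ v ∈ G.support := by
  rw [deg_eq_degree, SimpleGraph.degree_pos_iff_mem_support]

theorem edgeCount_mono {G H : SimpleGraph V} (h : G ≤ H) : edgeCount G ≤ edgeCount H := by
  simp only [edgeCount_eq_card_edgeFinset]
  exact card_le_card (SimpleGraph.edgeFinset_mono h)

theorem edgeCount_strictMono {G H : SimpleGraph V} (h : G < H) : edgeCount G < edgeCount H := by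
  simp only [edgeCount_eq_card_edgeFinset]
  exact card_lt_card (SimpleGraph.edgeFinset_strict_mono h)

theorem edgeCount_sup_le (G H : SimpleGraph V) :
    edgeCount (G ⊔ H) ≤ edgeCount G + edgeCount H := by
  simp only [edgeCount_eq_card_edgeFinset, SimpleGraph.edgeFinset_sup]
  exact card_union_le _ _

theorem edgeCount_sup_of_disjoint {G H : SimpleGraph V} (h : Disjoint G H) :
    edgeCount (G ⊔ H) = edgeCount G + edgeCount H := by
  simp only [edgeCount_eq_card_edgeFinset, SimpleGraph.edgeFinset_sup]
  exact card_union_of_disjoint (SimpleGraph.disjoint_edgeFinset.2 h)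

theorem edgeCount_add_edgeCount_compl (G : SimpleGraph V) :
    edgeCount G + edgeCount Gᶜ = (Fintype.card V).choose 2 := by
  rw [← edgeCount_sup_of_disjoint disjoint_compl_right, sup_compl_eq_top,
    edgeCount_eq_card_edgeFinset, SimpleGraph.card_edgeFinset_top_eq_card_choose_two]

theorem edgeCount_deleteIncidenceSet_add_deg (G : SimpleGraph V) (v : V) :
    edgeCount (G.deleteIncidenceSet v) + deg G v = edgeCount G := by
  have hle : G.degree v ≤ #G.edgeFinset := by
    rw [← SimpleGraph.card_incidenceFinset_eq_degree]
    exact card_le_card (G.incidenceFinset_subset v)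
  rw [edgeCount_eq_card_edgeFinset, edgeCount_eq_card_edgeFinset G, deg_eq_degree,
    SimpleGraph.card_edgeFinset_deleteIncidenceSet, Nat.sub_add_cancel hle]

/-- The triangles of `G` through the vertex `v`. -/
def trianglesAt (G : SimpleGraph V) (v : V) : Finset (Finset V) :=
  {s | G.IsNClique 3 s ∧ v ∈ s}

theorem mem_trianglesAt {G : SimpleGraph V} {v : V} {s : Finset V} :
    s ∈ trianglesAt G v ↔ G.IsNClique 3 s ∧ v ∈ s := by
  simp [trianglesAt]

theorem sum_card_trianglesAt (G : SimpleGraph V) :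
    ∑ v, #(trianglesAt G v) = 3 * triangleCount G := by
  unfold trianglesAt triangleCount
  simp only [card_filter]
  rw [sum_comm, mul_sum]
  refine sum_congr rfl fun s _ => ?_
  by_cases h : G.IsNClique 3 s
  · simp [h, h.card_eq]
  · simp [h]

theorem erase_injOn_trianglesAt (G : SimpleGraph V) (v : V) :
    Set.InjOn (fun s : Finset V => s.erase v) (trianglesAt G v) :=
  (erase_injOn' v).mono fun _ hs => (mem_trianglesAt.1 hs).2

theorem card_trianglesAt_le_choose_deg (G : SimpleGraph V) (v : V) :
    #(trianglesAt G v) ≤ (deg G v).choose 2 := by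
  unfold deg
  rw [← card_powersetCard]
  refine card_le_card_of_injOn (fun s => s.erase v) (fun s hs => ?_) (erase_injOn_trianglesAt G v)
  obtain ⟨hclique, hv⟩ := mem_trianglesAt.1 hs
  refine mem_powersetCard.2 ⟨fun u hu => ?_, (hclique.erase_of_mem hv).card_eq⟩
  obtain ⟨huv, hu⟩ := mem_erase.1 hu
  simpa using hclique.isClique hv hu huv.symm

theorem card_trianglesAt_le_edgeCount (G : SimpleGraph V) (v : V) :
    #(trianglesAt G v) ≤ edgeCount G := by
  rw [edgeCount_eq_card_edgeFinset]
  refine le_trans (card_le_card_of_injOn (fun s => s.erase v) (fun s hs => ?_)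
    (erase_injOn_trianglesAt G v)) (card_image_le (s := G.edgeFinset) (f := Sym2.toFinset))
  obtain ⟨hclique, hv⟩ := mem_trianglesAt.1 hs
  have hedge := hclique.erase_of_mem hv
  obtain ⟨x, y, hxy, he⟩ := card_eq_two.1 hedge.card_eq
  have hadj : G.Adj x y := hedge.isClique (by simp [he]) (by simp [he]) hxy
  exact mem_image.2 ⟨s(x, y), by simpa using hadj, by simp [he, Sym2.toFinset_mk_eq]⟩

theorem two_mul_card_trianglesAt_le_deg_sq (G : SimpleGraph V) (v : V) :
    2 * (#(trianglesAt G v) : ℝ) ≤ (deg G v : ℝ) ^ 2 := by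
  have h : (#(trianglesAt G v) : ℝ) ≤ (deg G v).choose 2 :=
    mod_cast card_trianglesAt_le_choose_deg G v
  rw [Nat.cast_choose_two] at h
  linarith [(Nat.cast_nonneg (deg G v) : (0 : ℝ) ≤ _)]

theorem two_mul_card_trianglesAt_le_deg_mul_sqrt (G : SimpleGraph V) (v : V) :
    2 * (#(trianglesAt G v) : ℝ) ≤ deg G v * √(2 * edgeCount G) := by
  have hdeg := two_mul_card_trianglesAt_le_deg_sq G v
  have hedge : (#(trianglesAt G v) : ℝ) ≤ edgeCount G := mod_cast card_trianglesAt_le_edgeCount G v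
  refine le_of_sq_le_sq ?_ (by positivity)
  calc (2 * (#(trianglesAt G v) : ℝ)) ^ 2
      = 2 * #(trianglesAt G v) * (2 * #(trianglesAt G v)) := sq _
    _ ≤ (deg G v : ℝ) ^ 2 * (2 * edgeCount G) := by gcongr
    _ = (deg G v * √(2 * edgeCount G)) ^ 2 := by rw [mul_pow, Real.sq_sqrt (by positivity)]

theorem six_mul_triangleCount_le_sqrt_cube (G : SimpleGraph V) :
    6 * (triangleCount G : ℝ) ≤ √(2 * edgeCount G) ^ 3 :=
  calc 6 * (triangleCount G : ℝ)
      = 2 * ((3 * triangleCount G : ℕ) : ℝ) := by push_cast; ring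
    _ = ∑ v, 2 * (#(trianglesAt G v) : ℝ) := by
        rw [← sum_card_trianglesAt, Nat.cast_sum, mul_sum]
    _ ≤ ∑ v, (deg G v : ℝ) * √(2 * edgeCount G) :=
        sum_le_sum fun v _ => two_mul_card_trianglesAt_le_deg_mul_sqrt G v
    _ = 2 * edgeCount G * √(2 * edgeCount G) := by
        rw [← sum_mul, ← Nat.cast_sum, sum_deg, Nat.cast_mul, Nat.cast_two]
    _ = √(2 * edgeCount G) ^ 3 := by
        rw [pow_succ, Real.sq_sqrt (by positivity)]

theorem triangleCount_le_deleteIncidenceSet_add (G : SimpleGraph V) (v : V) :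
    triangleCount G ≤ triangleCount (G.deleteIncidenceSet v) + #(trianglesAt G v) := by
  refine le_trans (card_le_card fun s hs => ?_) (card_union_le _ _)
  simp only [mem_filter, mem_univ, true_and, mem_union, mem_trianglesAt] at hs ⊢
  by_cases hv : v ∈ s
  · exact Or.inr ⟨hs, hv⟩
  · refine Or.inl ⟨fun x hx y hy hxy => ?_, hs.card_eq⟩
    rw [SimpleGraph.deleteIncidenceSet_adj]
    exact ⟨hs.isClique hx hy hxy, fun h => hv (h ▸ hx), fun h => hv (h ▸ hy)⟩

/-- Every non-isolated vertex of `G` has degree at least `D`. Isolated vertices are exempt, so that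
this is a condition on the subgraph spanned by the edges of `G`. -/
def SupportDegGE (G : SimpleGraph V) (D : ℝ) : Prop :=
  ∀ v ∈ G.support, D ≤ deg G v

/-- Deleting a vertex of degree `d` loses at most `d ^ 2 / 2` triangles and exactly `d` edges; at a
maximizer of `T - θ e` over the subgraphs with at least `b` edges, this either does not pay
(`2θ ≤ d`) or violates the constraint. -/
theorem exists_le_maximizing_triangleCount_sub (G : SimpleGraph V) (θ : ℝ) {b : ℝ}
    (hb : b ≤ edgeCount G) :
    ∃ H ≤ G, b ≤ edgeCount H ∧
      (triangleCount G : ℝ) - θ * edgeCount G ≤ triangleCount H - θ * edgeCount H ∧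
      ∀ v ∈ H.support, 2 * θ ≤ deg H v ∨ (edgeCount H : ℝ) < b + deg H v := by
  obtain ⟨H, hH, hmax⟩ := exists_max_image
    {H : SimpleGraph V | H ≤ G ∧ b ≤ edgeCount H}
    (fun H => (triangleCount H : ℝ) - θ * edgeCount H) ⟨G, by simp [hb]⟩
  simp only [mem_filter, mem_univ, true_and] at hH hmax
  refine ⟨H, hH.1, hH.2, hmax G ⟨le_rfl, hb⟩, fun v hv => ?_⟩
  by_contra! hcon
  have hedge : (edgeCount (H.deleteIncidenceSet v) : ℝ) + deg H v = edgeCount H :=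
    mod_cast edgeCount_deleteIncidenceSet_add_deg H v
  have htri : (triangleCount H : ℝ) ≤
      triangleCount (H.deleteIncidenceSet v) + #(trianglesAt H v) :=
    mod_cast triangleCount_le_deleteIncidenceSet_add H v
  have hloss := two_mul_card_trianglesAt_le_deg_sq H v
  have hdel := hmax (H.deleteIncidenceSet v)
    ⟨(H.deleteIncidenceSet_le v).trans hH.1, by linarith⟩
  have hpos : (0 : ℝ) < deg H v := mod_cast deg_pos_iff_mem_support.2 hv
  rw [← hedge] at hdel
  nlinarith [mul_pos hpos (sub_pos.2 hcon.1)]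

theorem exists_le_supportDegGE (G : SimpleGraph V) (θ : ℝ) :
    ∃ H ≤ G, SupportDegGE H (2 * θ) ∧
      (triangleCount G : ℝ) - θ * edgeCount G ≤ triangleCount H - θ * edgeCount H := by
  obtain ⟨H, hHG, -, hmax, hdeg⟩ :=
    exists_le_maximizing_triangleCount_sub G θ (b := 0) (Nat.cast_nonneg _)
  refine ⟨H, hHG, fun v hv => (hdeg v hv).resolve_right (not_lt.2 ?_), hmax⟩
  rw [zero_add]
  exact_mod_cast (Nat.le_add_left _ _).trans_eq (edgeCount_deleteIncidenceSet_add_deg H v)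

theorem exists_normalized_edgeCount_triangleCount (G : SimpleGraph V) {s : ℝ} (hs : 0 < s) :
    ∃ u : ℝ, 0 ≤ u ∧ 2 * (edgeCount G : ℝ) = u ^ 2 * s ^ 2 ∧
      6 * (triangleCount G : ℝ) ≤ u ^ 3 * s ^ 3 := by
  refine ⟨√(2 * edgeCount G) / s, by positivity, ?_, ?_⟩
  · rw [div_pow, Real.sq_sqrt (by positivity), div_mul_cancel₀ _ (by positivity)]
  · rw [div_pow, div_mul_cancel₀ _ (by positivity)]
    exact six_mul_triangleCount_le_sqrt_cube G

theorem le_edgeCount_of_le_triangleCount (G : SimpleGraph V) {s x : ℝ} (hs : 0 < s) (hx : 0 ≤ x)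
    (hT : (1 - x) * s ^ 3 ≤ 6 * triangleCount G) : (1 - x) * s ^ 2 / 2 ≤ edgeCount G := by
  obtain ⟨u, hu, hedge, htri⟩ := exists_normalized_edgeCount_triangleCount G hs
  have hcube : 1 - x ≤ u ^ 3 := le_of_mul_le_mul_right (hT.trans htri) (by positivity)
  have hsq : 1 - x ≤ u ^ 2 := by
    rcases le_total u 1 with h | h
    · exact hcube.trans (pow_le_pow_of_le_one hu h (by norm_num))
    · linarith [one_le_pow₀ h (n := 2)]
  nlinarith [mul_le_mul_of_nonneg_right hsq (sq_nonneg s)]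

/-- With `t = 1 - u ^ 2`, AM-GM gives `u ^ 3 ≤ (u ^ 2 + u ^ 4) / 2 = 1 - 3 t / 2 + t ^ 2 / 2`, and
`t` is comparable to `y`, so the gain `(4 * K + 1) * y * t` beats every error of order `y ^ 2`. -/
theorem cube_add_tangent_lt {K y u : ℝ} (hK : 0 ≤ K) (hy : 0 < y)
    (hlow : 1 - y ≤ u ^ 2) (hupp : u ^ 2 ≤ 1 - y / 2) :
    u ^ 3 + 3 / 2 * (1 - (4 * K + 1) * y) * (1 + K * y ^ 2 - u ^ 2) < 1 - K * y ^ 2 := by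
  obtain ⟨t, ht⟩ : ∃ t, u ^ 2 = 1 - t := ⟨1 - u ^ 2, by ring⟩
  have hamgm : u ^ 3 ≤ u ^ 2 / 2 + (u ^ 2) ^ 2 / 2 := by
    nlinarith [mul_nonneg (sq_nonneg u) (sq_nonneg (u - 1))]
  rw [ht] at hlow hupp hamgm ⊢
  have hty : t ^ 2 ≤ y ^ 2 := pow_le_pow_left₀ (by linarith) (by linarith) 2
  have hgain : (4 * K + 1) * y * (y / 2) ≤ (4 * K + 1) * y * t := by gcongr; linarith
  have herr : 0 ≤ (4 * K + 1) * y * (K * y ^ 2) := by positivity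
  nlinarith [mul_pos hy hy, mul_nonneg hK (sq_nonneg y)]

/-- Stability of the edge-triangle inequality. Here `H` maximizes `T - θ * e` over the subgraphs
with at least `(1 - y) * s ^ 2 / 2` edges, with `θ = (1 - (4 * K + 1) * y) * s / 2`: by
`cube_add_tangent_lt` it keeps more edges than that, so no vertex is blocked from deletion by the
constraint. -/
theorem exists_le_supportDegGE_of_triangleCount (G : SimpleGraph V) {K y s : ℝ} (hK : 0 ≤ K)
    (hy : 0 < y) (hKy : (4 * K + 1) * y < 1) (hs : 0 < s) (hys : 4 ≤ y * s)
    (hT : (1 - K * y ^ 2) * s ^ 3 ≤ 6 * triangleCount G)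
    (hE : 2 * (edgeCount G : ℝ) ≤ (1 + K * y ^ 2) * s ^ 2) :
    ∃ H ≤ G, 0 < edgeCount H ∧ SupportDegGE H ((1 - (4 * K + 1) * y) * s) := by
  set c := 1 - (4 * K + 1) * y
  have hy1 : y < 1 := by nlinarith
  have hbar : (1 - y) * s ^ 2 / 2 ≤ edgeCount G :=
    le_edgeCount_of_le_triangleCount G hs hy.le <| le_trans
      (mul_le_mul_of_nonneg_right (by nlinarith) (by positivity)) hT
  obtain ⟨H, hHG, hHbar, hmax, hdeg⟩ :=
    exists_le_maximizing_triangleCount_sub G (c * s / 2) hbar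
  have hHpos : (0 : ℝ) < edgeCount H :=
    lt_of_lt_of_le (by have := sub_pos.2 hy1; positivity) hHbar
  refine ⟨H, hHG, mod_cast hHpos, fun v hv => ?_⟩
  by_contra! hlt
  have hblocked : (edgeCount H : ℝ) < (1 - y) * s ^ 2 / 2 + deg H v :=
    (hdeg v hv).resolve_left (by linarith)
  obtain ⟨u, -, hedge, htri⟩ := exists_normalized_edgeCount_triangleCount H hs
  have hs2 : 0 < s ^ 2 := by positivity
  have hlow : 1 - y ≤ u ^ 2 := le_of_mul_le_mul_right (by linarith) hs2
  have hupp : u ^ 2 ≤ 1 - y / 2 := by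
    have hds : (deg H v : ℝ) ≤ s := hlt.le.trans (mul_le_of_le_one_left hs.le (by nlinarith))
    have hys2 : 4 * s ≤ y * s * s := mul_le_mul_of_nonneg_right hys hs.le
    exact le_of_mul_le_mul_right (by linarith [hds]) hs2
  have htangent : (1 - K * y ^ 2) * s ^ 3 ≤
      (u ^ 3 + 3 / 2 * c * (1 + K * y ^ 2 - u ^ 2)) * s ^ 3 :=
    calc (1 - K * y ^ 2) * s ^ 3
        ≤ 6 * triangleCount H + 3 / 2 * c * s * (2 * edgeCount G - 2 * edgeCount H) := by linarith
      _ ≤ u ^ 3 * s ^ 3 + 3 / 2 * c * s * ((1 + K * y ^ 2) * s ^ 2 - u ^ 2 * s ^ 2) := by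
          rw [hedge]; gcongr
      _ = _ := by ring
  exact absurd (cube_add_tangent_lt hK hy hlow hupp)
    (not_lt.2 (le_of_mul_le_mul_right htangent (by positivity)))

end Graph

section CliqueOn

variable {V : Type*}

/-- The graph on `V` whose edges are the pairs of distinct vertices of `s`; a triangle of `G` is a
three-element `s` with `cliqueOn s ≤ G`. -/
def cliqueOn (s : Finset V) : SimpleGraph V :=
  (⊤ : SimpleGraph s).map (Function.Embedding.subtype _)

theorem cliqueOn_le_iff {G : SimpleGraph V} {s : Finset V} : cliqueOn s ≤ G ↔ G.IsClique s := by
  rw [cliqueOn, SimpleGraph.map_le_iff_le_comap, top_le_iff]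
  exact SimpleGraph.induce_eq_top

theorem exists_adj_of_not_disjoint_cliqueOn {G : SimpleGraph V} {s : Finset V}
    (h : ¬ Disjoint G (cliqueOn s)) : ∃ u ∈ s, ∃ v ∈ s, G.Adj u v := by
  rw [SimpleGraph.disjoint_left] at h
  push Not at h
  obtain ⟨u, v, hG, hs⟩ := h
  obtain ⟨_, u, v, -, rfl, rfl⟩ := hs
  exact ⟨u, u.2, v, v.2, hG⟩

variable [Fintype V]

theorem edgeCount_cliqueOn (s : Finset V) : edgeCount (cliqueOn s) = (#s).choose 2 := by
  refine ((edgeCount_eq_card_edgeFinset _).trans (SimpleGraph.card_edgeFinset_map _ _)).trans ?_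
  rw [SimpleGraph.card_edgeFinset_top_eq_card_choose_two, Fintype.card_coe]

theorem triangleCount_eq_card_cliqueOn_le (G : SimpleGraph V) :
    triangleCount G = #{s ∈ powersetCard 3 univ | cliqueOn s ≤ G} := by
  unfold triangleCount
  congr 1
  ext s
  simp [SimpleGraph.isNClique_iff, cliqueOn_le_iff, and_comm]

theorem choose_three_le_triangleCount_of_cliqueOn_le {G : SimpleGraph V} {s : Finset V}
    (h : cliqueOn s ≤ G) : (#s).choose 3 ≤ triangleCount G := by
  rw [← card_powersetCard, triangleCount_eq_card_cliqueOn_le]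
  refine card_le_card fun t ht => ?_
  obtain ⟨hts, ht3⟩ := mem_powersetCard.1 ht
  simp only [mem_filter, mem_powersetCard, subset_univ, ht3, true_and]
  exact cliqueOn_le_iff.2 ((cliqueOn_le_iff.1 h).subset (mod_cast hts))

theorem card_not_disjoint_cliqueOn_le (G : SimpleGraph V) :
    #{s ∈ powersetCard 3 univ | ¬ Disjoint G (cliqueOn s)} ≤ edgeCount G * Fintype.card V := by
  rw [edgeCount_eq_card_edgeFinset, ← card_univ, ← card_product]
  refine le_trans (card_le_card fun s hs => ?_)
    (card_image_le (f := fun q : Sym2 V × V => insert q.2 q.1.toFinset))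
  obtain ⟨hs, hG⟩ := mem_filter.1 hs
  obtain ⟨u, hu, v, hv, huv⟩ := exists_adj_of_not_disjoint_cliqueOn hG
  have hcard : #(s \ {u, v}) = 1 := by
    rw [card_sdiff_of_subset (by simp [insert_subset_iff, hu, hv]), (mem_powersetCard.1 hs).2,
      card_pair huv.ne]
  obtain ⟨x, hx⟩ := card_eq_one.1 hcard
  refine mem_image.2 ⟨(s(u, v), x), by simpa using huv, ?_⟩
  rw [Sym2.toFinset_mk_eq, insert_eq, ← hx, sdiff_union_of_subset]
  simp [insert_subset_iff, hu, hv]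

theorem pow_edgeCount_sup_cliqueOn_le {p : ℝ} (h0 : 0 ≤ p) (h1 : p ≤ 1) (G : SimpleGraph V)
    {s : Finset V} (hs : #s = 3) :
    p ^ edgeCount (G ⊔ cliqueOn s) ≤ p ^ edgeCount G *
      ((if cliqueOn s ≤ G then 1 else 0) + p * (if ¬ Disjoint G (cliqueOn s) then 1 else 0)
        + p ^ 3) := by
  by_cases hle : cliqueOn s ≤ G
  · rw [sup_eq_left.2 hle, if_pos hle]
    refine le_mul_of_one_le_right (by positivity) ?_
    have : 0 ≤ p * (if ¬ Disjoint G (cliqueOn s) then 1 else 0) := by positivity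
    linarith [pow_nonneg h0 3]
  rw [if_neg hle, zero_add]
  by_cases hdisj : Disjoint G (cliqueOn s)
  · rw [if_neg (not_not.2 hdisj), edgeCount_sup_of_disjoint hdisj, edgeCount_cliqueOn, hs, pow_add]
    simp
  · have hlt : edgeCount G + 1 ≤ edgeCount (G ⊔ cliqueOn s) :=
      edgeCount_strictMono (left_lt_sup.2 hle)
    rw [if_pos hdisj, mul_one]
    calc p ^ edgeCount (G ⊔ cliqueOn s) ≤ p ^ (edgeCount G + 1) :=
          pow_le_pow_of_le_one h0 h1 hlt
      _ = p ^ edgeCount G * p := pow_succ _ _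
      _ ≤ p ^ edgeCount G * (p + p ^ 3) := by gcongr; exact le_add_of_nonneg_right (by positivity)

/-- The three terms come from the triples that span a triangle of `G`, share only some edge with
`G`, or share no edge with `G`. -/
theorem sum_pow_edgeCount_sup_cliqueOn_le {p : ℝ} (h0 : 0 ≤ p) (h1 : p ≤ 1) (G : SimpleGraph V) :
    ∑ s ∈ powersetCard 3 univ, p ^ edgeCount (G ⊔ cliqueOn s) ≤ p ^ edgeCount G *
      (triangleCount G + p * (edgeCount G * Fintype.card V) + (p * Fintype.card V) ^ 3) := by
  refine (sum_le_sum fun s hs =>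
    pow_edgeCount_sup_cliqueOn_le h0 h1 G (mem_powersetCard.1 hs).2).trans ?_
  rw [← mul_sum, sum_add_distrib, sum_add_distrib, ← mul_sum, sum_boole, sum_boole, sum_const,
    nsmul_eq_mul, card_powersetCard, card_univ, ← triangleCount_eq_card_cliqueOn_le, mul_pow,
    mul_comm (p ^ 3)]
  gcongr
  · exact_mod_cast card_not_disjoint_cliqueOn_le G
  · exact_mod_cast Nat.choose_le_pow _ 3

end CliqueOn

section ErdosRenyi

variable {n : ℕ} {p : ℝ}

theorem graphProb_nonneg (h0 : 0 ≤ p) (h1 : p ≤ 1) (G : SimpleGraph (Fin n)) :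
    0 ≤ graphProb n p G :=
  mul_nonneg (pow_nonneg h0 _) (pow_nonneg (sub_nonneg.2 h1) _)

theorem prob_eq_sum_indicator (A : Set (SimpleGraph (Fin n))) :
    prob n p A = ∑ G, A.indicator (graphProb n p) G :=
  rfl

theorem prob_mono (h0 : 0 ≤ p) (h1 : p ≤ 1) {A B : Set (SimpleGraph (Fin n))} (h : A ⊆ B) :
    prob n p A ≤ prob n p B :=
  sum_le_sum fun _ _ => Set.indicator_le_indicator_of_subset h (graphProb_nonneg h0 h1) _

theorem prob_union_le (h0 : 0 ≤ p) (h1 : p ≤ 1) (A B : Set (SimpleGraph (Fin n))) :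
    prob n p (A ∪ B) ≤ prob n p A + prob n p B := by
  simp only [prob_eq_sum_indicator, ← sum_add_distrib]
  refine sum_le_sum fun G _ => ?_
  rw [← Set.indicator_union_add_inter_apply]
  exact le_add_of_nonneg_right (Set.indicator_nonneg (fun _ _ => graphProb_nonneg h0 h1 _) _)

theorem sum_pow_edgeCount_mul_pow {V R : Type*} [Fintype V] [DecidableEq V] [CommSemiring R]
    (x y : R) (G : SimpleGraph V) :
    ∑ H with H ≤ G, x ^ edgeCount H * y ^ (edgeCount G - edgeCount H) =
      (x + y) ^ edgeCount G := by
  unfold edgeCount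
  rw [← sum_pow_mul_eq_add_pow]
  refine sum_nbij' (fun H => univ.filter (· ∈ H.edgeSet)) (fun S => SimpleGraph.fromEdgeSet S)
    (fun H hH => ?_) (fun S hS => ?_) (fun H _ => ?_) (fun S hS => ?_) (fun _ _ => rfl)
  · exact mem_powerset.2 <| monotone_filter_right _ fun _ _ he =>
      SimpleGraph.edgeSet_mono (mem_filter.1 hH).2 he
  · refine mem_filter.2 ⟨mem_univ _, G.fromEdgeSet_le.2 (Set.sdiff_subset.trans fun e he => ?_)⟩
    exact (mem_filter.1 (mem_powerset.1 hS he)).2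
  · simp
  · ext e
    suffices e ∈ S → ¬ e.IsDiag by simpa
    exact fun he => G.not_isDiag_of_mem_edgeSet (mem_filter.1 (mem_powerset.1 hS he)).2

theorem prob_superset (p : ℝ) (G : SimpleGraph (Fin n)) :
    prob n p {H | G ≤ H} = p ^ edgeCount G := by
  have htotal := edgeCount_add_edgeCount_compl G
  rw [Fintype.card_fin] at htotal
  calc prob n p {H | G ≤ H} = ∑ H with G ≤ H, graphProb n p H := (sum_filter _ _).symm
    _ = ∑ K with K ≤ Gᶜ,
          p ^ edgeCount G * (p ^ edgeCount K * (1 - p) ^ (edgeCount Gᶜ - edgeCount K)) := by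
        refine sum_nbij' (· \ G) (G ⊔ ·) (fun H _ => ?_) (fun K _ => ?_) (fun H hH => ?_)
          (fun K hK => ?_) (fun H hH => ?_)
        · simp [sdiff_eq]
        · simp
        · exact sup_sdiff_cancel_right (mem_filter.1 hH).2
        · rw [sup_sdiff_left_self]
          exact (le_compl_iff_disjoint_right.1 (mem_filter.1 hK).2).sdiff_eq_left
        · have hH : edgeCount G + edgeCount (H \ G) = edgeCount H := by
            rw [← edgeCount_sup_of_disjoint disjoint_sdiff_self_right,
              sup_sdiff_cancel_right (mem_filter.1 hH).2]
          rw [graphProb, ← hH, ← htotal, Nat.add_sub_add_left, pow_add, mul_assoc]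
    _ = p ^ edgeCount G := by
        rw [← mul_sum, sum_pow_edgeCount_mul_pow, add_sub_cancel, one_pow, mul_one]

theorem prob_exists_mem_le_le (h0 : 0 ≤ p) (h1 : p ≤ 1) (S : Finset (SimpleGraph (Fin n))) :
    prob n p {H | ∃ G ∈ S, G ≤ H} ≤ ∑ G ∈ S, p ^ edgeCount G := by
  simp only [← prob_superset, prob_eq_sum_indicator]
  rw [sum_comm]
  refine sum_le_sum fun H _ => ?_
  have hnonneg : ∀ G ∈ S, 0 ≤ {H | G ≤ H}.indicator (graphProb n p) H :=
    fun _ _ => Set.indicator_nonneg (fun _ _ => graphProb_nonneg h0 h1 _) _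
  by_cases hH : ∃ G ∈ S, G ≤ H
  · obtain ⟨G, hG, hGH⟩ := hH
    rw [Set.indicator_of_mem (show H ∈ {H | ∃ G ∈ S, G ≤ H} from ⟨G, hG, hGH⟩),
      ← Set.indicator_of_mem (show H ∈ {H | G ≤ H} from hGH) (graphProb n p)]
    exact single_le_sum hnonneg hG
  · rw [Set.indicator_of_notMem (by exact hH)]
    exact sum_nonneg hnonneg

/-- The truncated moment `E[T ^ j ; G ≤ H, H ∈ A]` over the random graph `H`. -/
def truncMoment (n : ℕ) (p : ℝ) (A : Set (SimpleGraph (Fin n))) (j : ℕ) (G : SimpleGraph (Fin n)) :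
    ℝ :=
  ∑ H with G ≤ H ∧ H ∈ A, graphProb n p H * (triangleCount H : ℝ) ^ j

theorem truncMoment_zero (p : ℝ) (A : Set (SimpleGraph (Fin n))) (G : SimpleGraph (Fin n)) :
    truncMoment n p A 0 G = prob n p ({H | G ≤ H} ∩ A) := by
  simp [truncMoment, prob, sum_filter]

theorem truncMoment_eq_zero {A : Set (SimpleGraph (Fin n))} {G : SimpleGraph (Fin n)} (j : ℕ)
    (h : ∀ H ∈ A, ¬ G ≤ H) : truncMoment n p A j G = 0 :=
  sum_eq_zero fun H hH => absurd (mem_filter.1 hH).2.1 (h H (mem_filter.1 hH).2.2)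

theorem truncMoment_succ (p : ℝ) (A : Set (SimpleGraph (Fin n))) (j : ℕ)
    (G : SimpleGraph (Fin n)) :
    truncMoment n p A (j + 1) G = ∑ s ∈ powersetCard 3 univ, truncMoment n p A j (G ⊔ cliqueOn s) :=
  calc truncMoment n p A (j + 1) G
      = ∑ H with G ≤ H ∧ H ∈ A, ∑ s ∈ powersetCard 3 univ with cliqueOn s ≤ H,
          graphProb n p H * (triangleCount H : ℝ) ^ j := by
        refine sum_congr rfl fun H _ => ?_
        rw [sum_const, ← triangleCount_eq_card_cliqueOn_le, nsmul_eq_mul]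
        ring
    _ = _ := by
        refine sum_comm' fun H s => ?_
        simp only [mem_filter, mem_univ, true_and, sup_le_iff]
        tauto

/-- A seed of `H` is a subgraph with at most `E` edges and at least `τ` triangles. -/
def HasSeed (E : ℕ) (τ : ℝ) (H : SimpleGraph (Fin n)) : Prop :=
  ∃ G ≤ H, edgeCount G ≤ E ∧ τ ≤ triangleCount G

/-- Without a seed, exposing one more triangle multiplies the moment by at most `X`, because the
graph exposed so far has fewer than `τ` triangles of its own. -/
theorem truncMoment_not_hasSeed_le (h0 : 0 ≤ p) (h1 : p ≤ 1) {E : ℕ} {τ X : ℝ} (hX : 0 ≤ X)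
    (hτ : τ + p * (E * n) + (p * n) ^ 3 ≤ X) (j : ℕ) (G : SimpleGraph (Fin n))
    (hG : edgeCount G + 3 * j ≤ E) :
    truncMoment n p {H | ¬ HasSeed E τ H} j G ≤ p ^ edgeCount G * X ^ j := by
  induction j generalizing G with
  | zero =>
    rw [truncMoment_zero, pow_zero, mul_one, ← prob_superset]
    exact prob_mono h0 h1 Set.inter_subset_left
  | succ j ih =>
    by_cases hT : τ ≤ triangleCount G
    · rw [truncMoment_eq_zero (A := {H | ¬ HasSeed E τ H}) _ fun H hseed hGH =>
        hseed ⟨G, hGH, by lia, hT⟩]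
      positivity
    have hedge : (edgeCount G : ℝ) ≤ E := mod_cast (by lia : edgeCount G ≤ E)
    calc truncMoment n p {H | ¬ HasSeed E τ H} (j + 1) G
        = ∑ s ∈ powersetCard 3 univ, truncMoment n p {H | ¬ HasSeed E τ H} j (G ⊔ cliqueOn s) :=
          truncMoment_succ ..
      _ ≤ ∑ s ∈ powersetCard 3 univ, p ^ edgeCount (G ⊔ cliqueOn s) * X ^ j := by
          refine sum_le_sum fun s hs => ih _ ?_
          have hsup := edgeCount_sup_le G (cliqueOn s)
          rw [edgeCount_cliqueOn, (mem_powersetCard.1 hs).2, Nat.choose_succ_self_right] at hsup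
          lia
      _ ≤ p ^ edgeCount G * (triangleCount G + p * (edgeCount G * n) + (p * n) ^ 3) * X ^ j := by
          rw [← sum_mul]
          gcongr
          simpa using sum_pow_edgeCount_sup_cliqueOn_le h0 h1 G
      _ ≤ p ^ edgeCount G * X * X ^ j := by
          have : triangleCount G + p * (edgeCount G * n) + (p * n) ^ 3 ≤ X :=
            le_trans (by gcongr; exact (not_le.1 hT).le) hτ
          gcongr
      _ = p ^ edgeCount G * X ^ (j + 1) := by ring

theorem prob_not_hasSeed_inter_le (h0 : 0 ≤ p) (h1 : p ≤ 1) {E j : ℕ} {τ X t : ℝ} (hX : 0 ≤ X)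
    (ht : 0 < t) (hτ : τ + p * (E * n) + (p * n) ^ 3 ≤ X) (hj : 3 * j ≤ E) :
    prob n p ({H | ¬ HasSeed E τ H} ∩ {H | t ≤ triangleCount H}) ≤ (X / t) ^ j := by
  have hbot : edgeCount (⊥ : SimpleGraph (Fin n)) = 0 := by simp [edgeCount]
  have hmoment := truncMoment_not_hasSeed_le h0 h1 hX hτ j ⊥ (by lia)
  rw [hbot, pow_zero, one_mul] at hmoment
  rw [div_pow, le_div_iff₀ (by positivity)]
  refine le_trans ?_ hmoment
  calc prob n p ({H | ¬ HasSeed E τ H} ∩ {H | t ≤ triangleCount H}) * t ^ j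
      = ∑ H with ¬ HasSeed E τ H ∧ t ≤ (triangleCount H : ℝ), graphProb n p H * t ^ j := by
        simp [prob, sum_mul, sum_filter]
    _ ≤ ∑ H with ¬ HasSeed E τ H ∧ t ≤ (triangleCount H : ℝ),
          graphProb n p H * (triangleCount H : ℝ) ^ j := by
        refine sum_le_sum fun H hH => ?_
        have := graphProb_nonneg h0 h1 H
        have := (mem_filter.1 hH).2.2
        gcongr
    _ ≤ truncMoment n p {H | ¬ HasSeed E τ H} j ⊥ := by
        refine sum_le_sum_of_subset_of_nonneg (fun H hH => ?_) fun H _ _ =>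
          mul_nonneg (graphProb_nonneg h0 h1 H) (by positivity)
        simpa using (mem_filter.1 hH).2.1

theorem pow_choose_two_le_prob_triangleCount (h0 : 0 ≤ p) (h1 : p ≤ 1) {r : ℕ} (hr : r ≤ n) {t : ℝ}
    (ht : t ≤ r.choose 3) : p ^ r.choose 2 ≤ prob n p {H | t ≤ triangleCount H} := by
  obtain ⟨s, -, rfl⟩ := exists_subset_card_eq
    (show r ≤ #(univ : Finset (Fin n)) by simpa using hr)
  rw [← edgeCount_cliqueOn, ← prob_superset]
  exact prob_mono h0 h1 fun H hH =>
    ht.trans (mod_cast choose_three_le_triangleCount_of_cliqueOn_le hH)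

theorem triangleCount_le_choose {V : Type*} [Fintype V] (G : SimpleGraph V) :
    triangleCount G ≤ (Fintype.card V).choose 3 := by
  rw [triangleCount_eq_card_cliqueOn_le, ← card_univ, ← card_powersetCard]
  exact card_filter_le _ _

/-- The lower bound is the probability of a clique on at most `s + 3` vertices. -/
theorem exp_neg_le_prob_triangleCount {L s : ℝ} (hL : 0 ≤ L) (hs : 0 ≤ s)
    (hne : ∃ H : SimpleGraph (Fin n), s ^ 3 / 6 ≤ triangleCount H) :
    Real.exp (-(L * (s + 3) ^ 2 / 2)) ≤
      prob n (Real.exp (-L)) {H | s ^ 3 / 6 ≤ triangleCount H} := by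
  obtain ⟨H, hH⟩ := hne
  obtain ⟨r, hrn, hr3, hrs⟩ : ∃ r ≤ n, s ^ 3 / 6 ≤ r.choose 3 ∧ (r : ℝ) ≤ s + 3 := by
    have hceil : ((⌈s⌉₊ + 2 : ℕ) : ℝ) ≤ s + 3 := by
      push_cast
      linarith [Nat.ceil_lt_add_one hs]
    rcases le_total n (⌈s⌉₊ + 2) with h | h
    · refine ⟨n, le_rfl, hH.trans ?_, le_trans (mod_cast h) hceil⟩
      simpa using Nat.cast_le (α := ℝ).2 (triangleCount_le_choose H)
    · refine ⟨⌈s⌉₊ + 2, h, le_trans ?_ (Nat.pow_le_choose 3 _), hceil⟩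
      rw [show ⌈s⌉₊ + 2 + 1 - 3 = ⌈s⌉₊ from rfl, show (Nat.factorial 3 : ℝ) = 6 by
        norm_num [Nat.factorial]]
      gcongr
      exact Nat.le_ceil s
  refine le_trans ?_ (pow_choose_two_le_prob_triangleCount (Real.exp_pos _).le
    (Real.exp_le_one_iff.2 (by linarith)) hrn hr3)
  rw [← Real.exp_nat_mul, Real.exp_le_exp]
  have hchoose : (r.choose 2 : ℝ) ≤ (s + 3) ^ 2 / 2 :=
    (Nat.choose_le_pow_div 2 r).trans (by norm_num [Nat.factorial]; gcongr)
  nlinarith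

end ErdosRenyi

section Counting

variable {V : Type*} [Fintype V]

theorem card_support_le_floor {G : SimpleGraph V} {D : ℝ} (hD : 0 < D) (hG : SupportDegGE G D) :
    #G.support.toFinset ≤ ⌊2 * (edgeCount G : ℝ) / D⌋₊ := by
  refine Nat.le_floor ((le_div_iff₀ hD).2 ?_)
  calc #G.support.toFinset * D = #G.support.toFinset • D := (nsmul_eq_mul _ _).symm
    _ ≤ ∑ v ∈ G.support.toFinset, (deg G v : ℝ) :=
        card_nsmul_le_sum _ _ _ fun v hv => hG v (Set.mem_toFinset.1 hv)
    _ ≤ ∑ v, (deg G v : ℝ) :=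
        sum_le_sum_of_subset_of_nonneg (subset_univ _) fun _ _ _ => Nat.cast_nonneg _
    _ = 2 * edgeCount G := mod_cast sum_deg G

theorem card_edgeCount_eq_support_subset_le [DecidableEq V] (m : ℕ) (W : Finset V) :
    #{G : SimpleGraph V | edgeCount G = m ∧ G.support ⊆ W} ≤ ((#W + 1).choose 2).choose m := by
  rw [← card_sym2, ← card_powersetCard]
  refine card_le_card_of_injOn (fun G => G.edgeFinset) (fun G hG => ?_)
    fun G _ H _ h => SimpleGraph.edgeFinset_inj.1 h
  obtain ⟨hm, hW⟩ := (mem_filter.1 hG).2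
  refine mem_powersetCard.2 ⟨?_, by rw [← hm, edgeCount_eq_card_edgeFinset]⟩
  simpa using SimpleGraph.edgeFinset_subset_sym2_of_support_subset hW

theorem exists_subset_image_univ_of_card_le {α : Type*} [DecidableEq α] [Nonempty α]
    {W : Finset α} {v : ℕ} (h : #W ≤ v) : ∃ f : Fin v → α, W ⊆ univ.image f := by
  obtain ⟨e⟩ := Function.Embedding.nonempty_of_card_le
    (show Fintype.card W ≤ Fintype.card (Fin v) by simpa using h)
  refine ⟨Function.extend e Subtype.val fun _ => Classical.arbitrary α, fun x hx => ?_⟩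
  exact mem_image.2 ⟨e ⟨x, hx⟩, mem_univ _, e.injective.extend_apply ..⟩

theorem card_edgeCount_eq_supportDegGE_le [DecidableEq V] [Nonempty V] (m : ℕ) {D : ℝ}
    (hD : 0 < D) :
    #{G : SimpleGraph V | edgeCount G = m ∧ SupportDegGE G D} ≤
      Fintype.card V ^ ⌊2 * (m : ℝ) / D⌋₊ * ((⌊2 * (m : ℝ) / D⌋₊ + 1).choose 2).choose m := by
  set v := ⌊2 * (m : ℝ) / D⌋₊
  have hcover : ({G : SimpleGraph V | edgeCount G = m ∧ SupportDegGE G D} : Finset _) ⊆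
      (univ : Finset (Fin v → V)).biUnion fun f =>
        {G | edgeCount G = m ∧ G.support ⊆ (univ.image f : Finset V)} := by
    intro G hG
    obtain ⟨hm, hdeg⟩ := (mem_filter.1 hG).2
    have hcard : #G.support.toFinset ≤ v := by simpa only [hm] using card_support_le_floor hD hdeg
    obtain ⟨f, hf⟩ := exists_subset_image_univ_of_card_le hcard
    refine mem_biUnion.2 ⟨f, mem_univ _, mem_filter.2 ⟨mem_univ _, hm, ?_⟩⟩
    exact fun x hx => hf (Set.mem_toFinset.2 hx)
  refine (card_le_card hcover).trans
    ((card_biUnion_le_card_mul _ _ (((v + 1).choose 2).choose m) fun f _ => ?_).trans_eq ?_)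
  · refine (card_edgeCount_eq_support_subset_le m _).trans ?_
    have : #(univ.image f) ≤ v := card_image_le.trans_eq (by simp)
    gcongr
  · simp

theorem choose_le_exp_mul {N m : ℕ} {x : ℝ} (hx : 0 < x) (hN : (N : ℝ) ≤ x * m) :
    (N.choose m : ℝ) ≤ Real.exp (m * (1 + Real.log x)) :=
  calc (N.choose m : ℝ) ≤ (N : ℝ) ^ m / m.factorial := Nat.choose_le_pow_div m N
    _ ≤ (x * m) ^ m / m.factorial := by gcongr
    _ = x ^ m * ((m : ℝ) ^ m / m.factorial) := by rw [mul_pow, mul_div_assoc]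
    _ ≤ x ^ m * Real.exp m := by
        gcongr
        exact Real.pow_div_factorial_le_exp _ (Nat.cast_nonneg _) m
    _ = Real.exp (m * (1 + Real.log x)) := by
        rw [mul_add, mul_one, Real.exp_add, Real.exp_nat_mul, Real.exp_log hx, mul_comm]

theorem card_edgeCount_eq_supportDegGE_le_exp [DecidableEq V] [Nonempty V] {m : ℕ} (hm : 0 < m)
    {D : ℝ} (hD : 0 < D) :
    (#{G : SimpleGraph V | edgeCount G = m ∧ SupportDegGE G D} : ℝ) ≤
      Real.exp (m * (2 * Real.log (Fintype.card V) / D + 1 + Real.log (4 * m / D ^ 2))) := by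
  set v := ⌊2 * (m : ℝ) / D⌋₊
  have hv : (v : ℝ) ≤ 2 * m / D := Nat.floor_le (by positivity)
  have hcard : (1 : ℝ) ≤ Fintype.card V := mod_cast Fintype.card_pos
  have hvertices : (Fintype.card V : ℝ) ^ v ≤
      Real.exp (m * (2 * Real.log (Fintype.card V) / D)) := by
    rw [← Real.rpow_natCast, Real.rpow_def_of_pos (by linarith), Real.exp_le_exp]
    calc Real.log (Fintype.card V) * v ≤ Real.log (Fintype.card V) * (2 * m / D) := by
          gcongr
      _ = m * (2 * Real.log (Fintype.card V) / D) := by ring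
  have hpairs : (((v + 1).choose 2).choose m : ℝ) ≤
      Real.exp (m * (1 + Real.log (4 * m / D ^ 2))) := by
    refine choose_le_exp_mul (by positivity) ?_
    calc (((v + 1).choose 2 : ℕ) : ℝ) ≤ (v : ℝ) ^ 2 := by
          rw [Nat.cast_choose_two]
          push_cast
          have : (v : ℝ) ≤ (v : ℝ) ^ 2 := mod_cast Nat.le_self_pow two_ne_zero v
          linarith
      _ ≤ (2 * m / D) ^ 2 := by gcongr
      _ = 4 * m / D ^ 2 * m := by ring
  calc (#{G : SimpleGraph V | edgeCount G = m ∧ SupportDegGE G D} : ℝ)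
      ≤ (Fintype.card V : ℝ) ^ v * (((v + 1).choose 2).choose m : ℕ) :=
        (Nat.cast_le.2 (card_edgeCount_eq_supportDegGE_le m hD)).trans_eq
          (by rw [Nat.cast_mul, Nat.cast_pow])
    _ ≤ Real.exp (m * (2 * Real.log (Fintype.card V) / D)) *
          Real.exp (m * (1 + Real.log (4 * m / D ^ 2))) := by gcongr
    _ = _ := by
        rw [← Real.exp_add]
        ring_nf

theorem sum_Ico_exp_neg_mul_le {c : ℝ} (hc : 1 ≤ c) (a b : ℕ) :
    ∑ m ∈ Ico a b, Real.exp (-(c * m)) ≤ 2 * Real.exp (-(c * a)) := by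
  rw [sum_Ico_eq_sum_range, mul_comm]
  calc ∑ i ∈ range (b - a), Real.exp (-(c * (a + i : ℕ)))
      ≤ ∑ i ∈ range (b - a), Real.exp (-(c * a)) * (1 / 2) ^ i := by
        refine sum_le_sum fun i _ => ?_
        calc Real.exp (-(c * (a + i : ℕ))) = Real.exp (-(c * a)) * Real.exp (-c) ^ i := by
              rw [← Real.exp_nat_mul, ← Real.exp_add]
              push_cast
              ring_nf
          _ ≤ Real.exp (-(c * a)) * (1 / 2) ^ i := by
              gcongr
              exact (Real.exp_le_exp.2 (neg_le_neg hc)).trans Real.exp_neg_one_lt_half.le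
    _ ≤ Real.exp (-(c * a)) * 2 := by
        rw [← mul_sum]
        gcongr
        exact sum_geometric_two_le _

theorem card_edgeCount_eq_supportDegGE_mul_pow_le {n E m : ℕ} (hn : 0 < n) {D L c : ℝ}
    (hD : 0 < D) (hm : 0 < m) (hmE : m ≤ E)
    (hentropy : 2 * Real.log n / D + 1 + Real.log (4 * E / D ^ 2) + c ≤ L) :
    (#{G : SimpleGraph (Fin n) | edgeCount G = m ∧ SupportDegGE G D} : ℝ) * Real.exp (-L) ^ m ≤
      Real.exp (-(c * m)) := by
  have : Nonempty (Fin n) := ⟨⟨0, hn⟩⟩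
  have hlog : Real.log (4 * m / D ^ 2) ≤ Real.log (4 * E / D ^ 2) := by gcongr
  have hcount := card_edgeCount_eq_supportDegGE_le_exp (V := Fin n) hm hD
  rw [Fintype.card_fin] at hcount
  refine (mul_le_mul_of_nonneg_right hcount (by positivity)).trans ?_
  rw [← Real.exp_nat_mul, ← Real.exp_add, Real.exp_le_exp]
  calc (m : ℝ) * (2 * Real.log n / D + 1 + Real.log (4 * m / D ^ 2)) + m * -L
      = m * (2 * Real.log n / D + 1 + Real.log (4 * m / D ^ 2) - L) := by ring
    _ ≤ m * -c := by
        gcongr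
        linarith
    _ = -(c * m) := by ring

/-- In a union bound over the graphs `G`, each edge costs at most `e ^ (L - c)` choices. -/
theorem prob_exists_supportDegGE_le {n E : ℕ} (hn : 0 < n) {D L c x : ℝ} (hD : 0 < D)
    (hL : 0 ≤ L) (hc : 1 ≤ c) (hx : 0 < x)
    (hentropy : 2 * Real.log n / D + 1 + Real.log (4 * E / D ^ 2) + c ≤ L) :
    prob n (Real.exp (-L)) {H | ∃ G ≤ H, x ≤ edgeCount G ∧ edgeCount G ≤ E ∧ SupportDegGE G D} ≤
      2 * Real.exp (-(c * x)) := by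
  set S : Finset (SimpleGraph (Fin n)) :=
    {G | x ≤ edgeCount G ∧ edgeCount G ≤ E ∧ SupportDegGE G D}
  have hmaps : ∀ G ∈ S, edgeCount G ∈ Ico ⌈x⌉₊ (E + 1) := fun G hG => by
    obtain ⟨hlow, hup, -⟩ := (mem_filter.1 hG).2
    exact mem_Ico.2 ⟨Nat.ceil_le.2 hlow, Nat.lt_succ_of_le hup⟩
  have hfibre : ∀ m ∈ Ico ⌈x⌉₊ (E + 1),
      ∑ G ∈ S with edgeCount G = m, Real.exp (-L) ^ edgeCount G ≤ Real.exp (-(c * m)) := by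
    intro m hm
    obtain ⟨hlow, hup⟩ := mem_Ico.1 hm
    refine le_trans ?_ (card_edgeCount_eq_supportDegGE_mul_pow_le hn hD
      ((Nat.ceil_pos.2 hx).trans_le hlow) (Nat.le_of_lt_succ hup) hentropy)
    rw [sum_congr rfl fun G hG => by rw [(mem_filter.1 hG).2], sum_const, nsmul_eq_mul]
    gcongr
    intro G hG
    simp only [S, mem_filter, mem_univ, true_and] at hG ⊢
    exact ⟨hG.2, hG.1.2.2⟩
  calc prob n (Real.exp (-L)) {H | ∃ G ≤ H, x ≤ edgeCount G ∧ edgeCount G ≤ E ∧ SupportDegGE G D}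
      ≤ prob n (Real.exp (-L)) {H | ∃ G ∈ S, G ≤ H} :=
        prob_mono (Real.exp_pos _).le (Real.exp_le_one_iff.2 (neg_nonpos.2 hL))
          fun H ⟨G, hGH, hG⟩ => ⟨G, mem_filter.2 ⟨mem_univ G, hG⟩, hGH⟩
    _ ≤ ∑ G ∈ S, Real.exp (-L) ^ edgeCount G :=
        prob_exists_mem_le_le (Real.exp_pos _).le (Real.exp_le_one_iff.2 (neg_nonpos.2 hL)) S
    _ = ∑ m ∈ Ico ⌈x⌉₊ (E + 1), ∑ G ∈ S with edgeCount G = m, Real.exp (-L) ^ edgeCount G :=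
        (sum_fiberwise_of_maps_to hmaps _).symm
    _ ≤ ∑ m ∈ Ico ⌈x⌉₊ (E + 1), Real.exp (-(c * m)) := sum_le_sum hfibre
    _ ≤ 2 * Real.exp (-(c * ⌈x⌉₊)) := sum_Ico_exp_neg_mul_le hc _ _
    _ ≤ 2 * Real.exp (-(c * x)) := by
        gcongr
        exact Nat.le_ceil x

end Counting

section SparseRegime

/-- The conditions under which the upper tail of triangles in `G(n, e ^ (-L))` at `s ^ 3 / 6`, the
number of triangles of a clique on about `s` vertices, is governed by near-cliques up to the
relative error `ε`. The width `ω` is the proportion of the triangles lost in each of the passages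
from the graph to a seed and from the seed to a core. -/
structure SparseRegime (n : ℕ) (L s ω ε : ℝ) : Prop where
  pos : 0 < n
  one_le_log : 1 ≤ L
  width_pos : 0 < ω
  width_le : ω ≤ ε
  error_small : 289 * ε < 1
  side_large : 15 ≤ ε * s
  background_le :
    Real.exp (-L) * n * (6 * s ^ 2 * L / ω) + (Real.exp (-L) * n) ^ 3 ≤ ω * s ^ 3 / 6
  entropy_le :
    36 * Real.log n / (ω ^ 2 * s) + (2 + Real.log (6 ^ 5 * L ^ 3 / ω ^ 5)) / L ≤ ε

/-- The number of edges allowed in a seed. It is a multiple of three because a seed is the union of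
`⌈s ^ 2 * L / ω⌉₊` triangles. -/
def seedSize (L s ω : ℝ) : ℕ :=
  3 * ⌈s ^ 2 * L / ω⌉₊

/-- The minimum degree of a core: removing vertices of smaller degree from a seed costs at most
`ω * s ^ 3 / 6` triangles. -/
def coreDeg (L s ω : ℝ) : ℝ :=
  ω ^ 2 * s / (18 * L)

theorem HasSeed.exists_core {n E : ℕ} {τ D : ℝ} {H : SimpleGraph (Fin n)} (h : HasSeed E τ H)
    (hD : 0 ≤ D) :
    ∃ G ≤ H, edgeCount G ≤ E ∧ SupportDegGE G D ∧ τ - D / 2 * E ≤ triangleCount G := by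
  obtain ⟨S, hSH, hSE, hτ⟩ := h
  obtain ⟨G, hGS, hdeg, htri⟩ := exists_le_supportDegGE S (D / 2)
  rw [mul_div_cancel₀ _ two_ne_zero] at hdeg
  refine ⟨G, hGS.trans hSH, (edgeCount_mono hGS).trans hSE, hdeg, ?_⟩
  have hcost : D / 2 * edgeCount S ≤ D / 2 * E := by gcongr
  have hgain : 0 ≤ D / 2 * edgeCount G := by positivity
  linarith

theorem log_entropy_ratio_nonneg {L ω : ℝ} (hL : 1 ≤ L) (hω : 0 < ω) (hω1 : ω ≤ 1) :
    0 ≤ Real.log (6 ^ 5 * L ^ 3 / ω ^ 5) := by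
  refine Real.log_nonneg ((one_le_div₀ (by positivity)).2 ?_)
  calc ω ^ 5 ≤ 1 := pow_le_one₀ hω.le hω1
    _ ≤ L ^ 3 := one_le_pow₀ hL
    _ ≤ 6 ^ 5 * L ^ 3 := le_mul_of_one_le_left (by positivity) (by norm_num)

namespace SparseRegime

variable {n : ℕ} {L s ω ε : ℝ}

theorem log_pos (h : SparseRegime n L s ω ε) : 0 < L :=
  one_pos.trans_le h.one_le_log

theorem error_pos (h : SparseRegime n L s ω ε) : 0 < ε :=
  h.width_pos.trans_le h.width_le

theorem one_le_side (h : SparseRegime n L s ω ε) : 1 ≤ s := by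
  nlinarith [h.side_large, h.error_small, h.error_pos]

theorem sqrt_error_lt (h : SparseRegime n L s ω ε) : 17 * √ε < 1 := by
  have := (Real.sqrt_lt' (show (0 : ℝ) < 1 / 17 by norm_num)).2
    (show ε < (1 / 17) ^ 2 by linarith [h.error_small])
  linarith

theorem four_le_sqrt_error_mul (h : SparseRegime n L s ω ε) : 4 ≤ √ε * s := by
  have hε : ε ≤ √ε := Real.le_sqrt_of_sq_le (by nlinarith [h.error_pos, h.error_small])
  nlinarith [h.side_large, h.one_le_side]

theorem two_le_error_mul_log (h : SparseRegime n L s ω ε) : 2 ≤ ε * L := by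
  have hω := h.width_pos
  have hL := h.log_pos
  have hs := h.one_le_side
  have hω1 : ω ≤ 1 := by linarith [h.width_le, h.error_small, h.error_pos]
  have hvertices : 0 ≤ 36 * Real.log n / (ω ^ 2 * s) := by positivity
  rw [← div_le_iff₀ hL]
  calc 2 / L ≤ (2 + Real.log (6 ^ 5 * L ^ 3 / ω ^ 5)) / L := by
        gcongr
        linarith [log_entropy_ratio_nonneg h.one_le_log hω hω1]
    _ ≤ ε := by linarith [h.entropy_le]

theorem coreDeg_pos (h : SparseRegime n L s ω ε) : 0 < coreDeg L s ω := by
  have := h.width_pos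
  have := h.log_pos
  have := h.one_le_side
  unfold coreDeg
  positivity

theorem one_le_sq_mul_log_div (h : SparseRegime n L s ω ε) : 1 ≤ s ^ 2 * L / ω := by
  rw [one_le_div₀ h.width_pos]
  calc ω ≤ 1 := by linarith [h.width_le, h.error_small, h.error_pos]
    _ ≤ s ^ 2 * L := one_le_mul_of_one_le_of_one_le (one_le_pow₀ h.one_le_side) h.one_le_log

theorem seedSize_le (h : SparseRegime n L s ω ε) : (seedSize L s ω : ℝ) ≤ 6 * s ^ 2 * L / ω := by
  have hone := h.one_le_sq_mul_log_div
  have hceil := Nat.ceil_lt_add_one (zero_le_one.trans hone)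
  calc (seedSize L s ω : ℝ) = 3 * ⌈s ^ 2 * L / ω⌉₊ := by simp [seedSize]
    _ ≤ 6 * (s ^ 2 * L / ω) := by linarith
    _ = 6 * s ^ 2 * L / ω := by ring

theorem coreDeg_mul_seedSize_le (h : SparseRegime n L s ω ε) :
    coreDeg L s ω / 2 * seedSize L s ω ≤ ω * s ^ 3 / 6 := by
  have hD := h.coreDeg_pos
  have hω := h.width_pos
  have hL := h.log_pos
  calc coreDeg L s ω / 2 * seedSize L s ω
      ≤ coreDeg L s ω / 2 * (6 * s ^ 2 * L / ω) := by gcongr; exact h.seedSize_le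
    _ = ω * s ^ 3 / 6 := by
        unfold coreDeg
        field_simp
        ring

theorem four_mul_seedSize_div_le (h : SparseRegime n L s ω ε) :
    4 * seedSize L s ω / coreDeg L s ω ^ 2 ≤ 6 ^ 5 * L ^ 3 / ω ^ 5 := by
  have hD := h.coreDeg_pos
  have hω := h.width_pos
  have hL := h.log_pos
  have hs := h.one_le_side
  calc 4 * seedSize L s ω / coreDeg L s ω ^ 2
      ≤ 4 * (6 * s ^ 2 * L / ω) / coreDeg L s ω ^ 2 := by gcongr; exact h.seedSize_le
    _ = 6 ^ 5 * L ^ 3 / ω ^ 5 := by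
        unfold coreDeg
        field_simp
        norm_num

theorem prob_not_hasSeed_inter_le (h : SparseRegime n L s ω ε) :
    prob n (Real.exp (-L)) ({H | ¬ HasSeed (seedSize L s ω) ((1 - 2 * ω) * (s ^ 3 / 6)) H} ∩
      {H | s ^ 3 / 6 ≤ triangleCount H}) ≤ Real.exp (-(L * s ^ 2)) := by
  have hω := h.width_pos
  have hω1 : 0 ≤ 1 - ω := by linarith [h.width_le, h.error_small, h.error_pos]
  have hs := h.one_le_side
  have hbackground : (1 - 2 * ω) * (s ^ 3 / 6) + Real.exp (-L) * (seedSize L s ω * n) +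
      (Real.exp (-L) * n) ^ 3 ≤ (1 - ω) * (s ^ 3 / 6) := by
    have : Real.exp (-L) * n * seedSize L s ω ≤ Real.exp (-L) * n * (6 * s ^ 2 * L / ω) := by
      gcongr
      exact h.seedSize_le
    linarith [h.background_le]
  calc _ ≤ ((1 - ω) * (s ^ 3 / 6) / (s ^ 3 / 6)) ^ ⌈s ^ 2 * L / ω⌉₊ :=
        _root_.prob_not_hasSeed_inter_le (Real.exp_pos _).le
          (Real.exp_le_one_iff.2 (neg_nonpos.2 h.log_pos.le)) (by positivity) (by positivity)
          hbackground le_rfl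
    _ = (1 - ω) ^ ⌈s ^ 2 * L / ω⌉₊ := by rw [mul_div_cancel_right₀ _ (by positivity)]
    _ ≤ Real.exp (-ω) ^ ⌈s ^ 2 * L / ω⌉₊ := by
        gcongr
        exact Real.one_sub_le_exp_neg ω
    _ = Real.exp (-(ω * ⌈s ^ 2 * L / ω⌉₊)) := by rw [← Real.exp_nat_mul]; ring_nf
    _ ≤ Real.exp (-(L * s ^ 2)) := by
        rw [Real.exp_le_exp, neg_le_neg_iff, mul_comm L, mul_comm ω, ← div_le_iff₀ hω]
        exact Nat.le_ceil _

theorem prob_exists_core_le (h : SparseRegime n L s ω ε) :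
    prob n (Real.exp (-L)) {H | ∃ G ≤ H, (1 + 4 * ε) * s ^ 2 / 2 ≤ edgeCount G ∧
      edgeCount G ≤ seedSize L s ω ∧ SupportDegGE G (coreDeg L s ω)} ≤
      2 * Real.exp (-((1 - ε) * L * ((1 + 4 * ε) * s ^ 2 / 2))) := by
  have hε := h.error_pos
  have hL := h.log_pos
  have hs := h.one_le_side
  have hω := h.width_pos
  have hD := h.coreDeg_pos
  have hsize : (0 : ℝ) < seedSize L s ω := by
    have := Nat.ceil_pos.2 (one_pos.trans_le h.one_le_sq_mul_log_div)
    unfold seedSize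
    positivity
  have hlog : Real.log (4 * seedSize L s ω / coreDeg L s ω ^ 2) ≤
      Real.log (6 ^ 5 * L ^ 3 / ω ^ 5) :=
    Real.log_le_log (by positivity) h.four_mul_seedSize_div_le
  have hvertices : 2 * Real.log n / coreDeg L s ω = 36 * Real.log n / (ω ^ 2 * s) * L := by
    unfold coreDeg
    field_simp
    ring
  have hentropy : 36 * Real.log n / (ω ^ 2 * s) * L + (2 + Real.log (6 ^ 5 * L ^ 3 / ω ^ 5)) ≤
      ε * L := by
    have := mul_le_mul_of_nonneg_right h.entropy_le hL.le
    rwa [add_mul, div_mul_cancel₀ _ hL.ne'] at this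
  refine prob_exists_supportDegGE_le h.pos hD hL.le ?_ (by positivity) (by linarith)
  nlinarith [h.two_le_error_mul_log, h.error_small]

theorem exists_near_clique_or_core (h : SparseRegime n L s ω ε) {H : SimpleGraph (Fin n)}
    (hH : HasSeed (seedSize L s ω) ((1 - 2 * ω) * (s ^ 3 / 6)) H) :
    (∃ G ≤ H, 0 < edgeCount G ∧ SupportDegGE G ((1 - 17 * √ε) * s)) ∨
      ∃ G ≤ H, (1 + 4 * ε) * s ^ 2 / 2 ≤ edgeCount G ∧ edgeCount G ≤ seedSize L s ω ∧
        SupportDegGE G (coreDeg L s ω) := by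
  obtain ⟨G, hGH, hGE, hdeg, htri⟩ := hH.exists_core h.coreDeg_pos.le
  refine or_iff_not_imp_right.2 fun hlarge => ?_
  have hfew : (edgeCount G : ℝ) < (1 + 4 * ε) * s ^ 2 / 2 :=
    not_le.1 fun hmany => hlarge ⟨G, hGH, hmany, hGE, hdeg⟩
  have hs : 0 < s := one_pos.trans_le h.one_le_side
  have hwidth : ω * s ^ 3 ≤ ε * s ^ 3 := by gcongr; exact h.width_le
  have herror : 0 < ε * s ^ 3 := mul_pos h.error_pos (by positivity)
  have hsq : √ε ^ 2 = ε := Real.sq_sqrt h.error_pos.le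
  obtain ⟨K, hKG, hpos, hKdeg⟩ := exists_le_supportDegGE_of_triangleCount G (K := 4) (y := √ε)
    (by norm_num) (Real.sqrt_pos.2 h.error_pos) (by linarith [h.sqrt_error_lt]) hs
    h.four_le_sqrt_error_mul (by rw [hsq]; linarith [h.coreDeg_mul_seedSize_le])
    (by rw [hsq]; linarith)
  exact ⟨K, hKG.trans hGH, hpos, by convert hKdeg using 2; norm_num⟩

theorem log_mul_sq_add_three_le (h : SparseRegime n L s ω ε) :
    L * (s + 3) ^ 2 / 2 ≤ L * s ^ 2 * (1 + ε) / 2 := by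
  have hside : 15 * s ≤ ε * s * s := mul_le_mul_of_nonneg_right h.side_large
    (zero_le_one.trans h.one_le_side)
  have hsq : (s + 3) ^ 2 ≤ s ^ 2 * (1 + ε) := by linarith [h.one_le_side]
  linarith [mul_le_mul_of_nonneg_left hsq h.log_pos.le]

theorem exp_add_exp_le (h : SparseRegime n L s ω ε) :
    Real.exp (-(L * s ^ 2)) + 2 * Real.exp (-((1 - ε) * L * ((1 + 4 * ε) * s ^ 2 / 2))) ≤
      3 * Real.exp (-(s ^ 2 / 4)) * Real.exp (-(L * (s + 3) ^ 2 / 2)) := by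
  have hclique := h.log_mul_sq_add_three_le
  have hs : 0 ≤ s ^ 2 := sq_nonneg s
  have hL : s ^ 2 ≤ L * s ^ 2 := le_mul_of_one_le_left hs h.one_le_log
  have hεL : 2 * s ^ 2 ≤ ε * L * s ^ 2 :=
    mul_le_mul_of_nonneg_right h.two_le_error_mul_log hs
  have hε : 289 * ε * (L * s ^ 2) ≤ L * s ^ 2 :=
    mul_le_of_le_one_left (by linarith) h.error_small.le
  have hε2 : 289 * ε * (ε * L * s ^ 2) ≤ ε * L * s ^ 2 :=
    mul_le_of_le_one_left (by linarith) h.error_small.le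
  have hseed : Real.exp (-(L * s ^ 2)) ≤ Real.exp (-(s ^ 2 / 4) + -(L * (s + 3) ^ 2 / 2)) :=
    Real.exp_le_exp.2 (by linarith)
  have hcore : Real.exp (-((1 - ε) * L * ((1 + 4 * ε) * s ^ 2 / 2))) ≤
      Real.exp (-(s ^ 2 / 4) + -(L * (s + 3) ^ 2 / 2)) :=
    Real.exp_le_exp.2 (by linarith)
  rw [mul_assoc 3, ← Real.exp_add]
  linarith

theorem condProb_le (h : SparseRegime n L s ω ε) {N : Set (SimpleGraph (Fin n))}
    (hN : ∀ H ∈ N, ¬ ∃ G ≤ H, 0 < edgeCount G ∧ SupportDegGE G ((1 - 17 * √ε) * s)) :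
    condProb n (Real.exp (-L)) N {H | s ^ 3 / 6 ≤ triangleCount H} ≤
      3 * Real.exp (-(s ^ 2 / 4)) := by
  set B := {H : SimpleGraph (Fin n) | s ^ 3 / 6 ≤ triangleCount H}
  have hp0 : 0 ≤ Real.exp (-L) := (Real.exp_pos _).le
  have hp1 : Real.exp (-L) ≤ 1 := Real.exp_le_one_iff.2 (neg_nonpos.2 h.log_pos.le)
  rcases B.eq_empty_or_nonempty with hB | hB
  · have : condProb n (Real.exp (-L)) N B = 0 := by simp [condProb, prob, hB]
    exact this.trans_le (by positivity)
  have hlower := exp_neg_le_prob_triangleCount h.log_pos.le (zero_le_one.trans h.one_le_side) hB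
  have hcover : N ∩ B ⊆
      ({H | ¬ HasSeed (seedSize L s ω) ((1 - 2 * ω) * (s ^ 3 / 6)) H} ∩ B) ∪
        {H | ∃ G ≤ H, (1 + 4 * ε) * s ^ 2 / 2 ≤ edgeCount G ∧ edgeCount G ≤ seedSize L s ω ∧
          SupportDegGE G (coreDeg L s ω)} := by
    rintro H ⟨hHN, hHB⟩
    by_cases hseed : HasSeed (seedSize L s ω) ((1 - 2 * ω) * (s ^ 3 / 6)) H
    · exact Or.inr ((h.exists_near_clique_or_core hseed).resolve_left (hN H hHN))
    · exact Or.inl ⟨hseed, hHB⟩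
  rw [condProb, div_le_iff₀ ((Real.exp_pos _).trans_le hlower)]
  calc prob n (Real.exp (-L)) (N ∩ B) ≤ _ := prob_mono hp0 hp1 hcover
    _ ≤ _ := prob_union_le hp0 hp1 _ _
    _ ≤ _ := add_le_add h.prob_not_hasSeed_inter_le h.prob_exists_core_le
    _ ≤ _ := h.exp_add_exp_le
    _ ≤ _ := mul_le_mul_of_nonneg_left hlower (by positivity)

end SparseRegime

end SparseRegime

section NearCliqueParameters

/-- The number of vertices of a clique with about `a * k` triangles. -/
def cliqueSide (a k : ℝ) : ℝ :=
  (6 * a * k) ^ ((1 : ℝ) / 3)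

/-- The error `ψ_n` in the paper, for the edge probability `p`. -/
def nearCliqueError (C' p w k : ℝ) (n : ℕ) : ℝ :=
  C' * Real.log n / (w ^ 2 * k ^ ((1 : ℝ) / 3)) +
    Real.log (C' * w ^ (-(5 : ℝ)) * Real.log (1 / p) ^ 3) / Real.log (1 / p)

/-- The size `m_n` of the near-clique in the paper. -/
def nearCliqueSize (a w k C : ℝ) : ℝ :=
  1 / 2 * (6 * (a - 2 * w) * k * (1 - C * k ^ (-(1 : ℝ) / 3))) ^ ((2 : ℝ) / 3)

/-- A value of the constant `C'` for which `nearCliqueError` dominates the entropy of the cores. -/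
def entropyConst (a : ℝ) : ℝ :=
  1 + 36 * a ^ 2 / (6 * a) ^ ((1 : ℝ) / 3) + Real.exp 2 * (6 * a) ^ 5

theorem cliqueSide_eq_mul {a k : ℝ} (ha : 0 ≤ a) (hk : 0 ≤ k) :
    cliqueSide a k = (6 * a) ^ ((1 : ℝ) / 3) * k ^ ((1 : ℝ) / 3) :=
  Real.mul_rpow (by positivity) hk

theorem cliqueSide_pow_three {a k : ℝ} (ha : 0 ≤ a) (hk : 0 ≤ k) :
    cliqueSide a k ^ 3 = 6 * a * k := by
  rw [cliqueSide, ← Real.rpow_mul_natCast (by positivity)]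
  norm_num

theorem cliqueSide_pos {a k : ℝ} (ha : 0 < a) (hk : 0 < k) : 0 < cliqueSide a k :=
  Real.rpow_pos_of_pos (by positivity) _

theorem one_le_entropyConst {a : ℝ} (ha : 0 ≤ a) : 1 ≤ entropyConst a := by
  unfold entropyConst
  have : 0 ≤ 36 * a ^ 2 / (6 * a) ^ ((1 : ℝ) / 3) := by positivity
  have : 0 ≤ Real.exp 2 * (6 * a) ^ 5 := by positivity
  linarith

theorem sqrt_two_mul_nearCliqueSize_le {a w k C : ℝ} (hw : 0 ≤ w) (hwa : 2 * w ≤ a) (hk : 0 < k)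
    (hC : 0 ≤ C) (hCk : C ≤ k ^ ((1 : ℝ) / 3)) :
    (2 * nearCliqueSize a w k C) ^ ((1 : ℝ) / 2) ≤ cliqueSide a k := by
  have hκ : 0 < k ^ ((1 : ℝ) / 3) := by positivity
  have hinv : k ^ (-(1 : ℝ) / 3) = (k ^ ((1 : ℝ) / 3))⁻¹ := by rw [neg_div, Real.rpow_neg hk.le]
  have hfactor : 0 ≤ 1 - C * k ^ (-(1 : ℝ) / 3) := by
    rw [hinv, sub_nonneg, ← div_eq_mul_inv, div_le_one hκ]
    exact hCk
  have hfactor1 : 1 - C * k ^ (-(1 : ℝ) / 3) ≤ 1 := sub_le_self _ (by positivity)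
  have hbase : 0 ≤ 6 * (a - 2 * w) * k := by have := sub_nonneg.2 hwa; positivity
  have hroot : (2 * nearCliqueSize a w k C) ^ ((1 : ℝ) / 2) =
      (6 * (a - 2 * w) * k * (1 - C * k ^ (-(1 : ℝ) / 3))) ^ ((1 : ℝ) / 3) := by
    rw [nearCliqueSize, ← mul_assoc, mul_one_div_cancel two_ne_zero, one_mul,
      ← Real.rpow_mul (mul_nonneg hbase hfactor)]
    norm_num
  rw [hroot, cliqueSide]
  refine Real.rpow_le_rpow (mul_nonneg hbase hfactor) ?_ (by norm_num)
  calc 6 * (a - 2 * w) * k * (1 - C * k ^ (-(1 : ℝ) / 3)) ≤ 6 * (a - 2 * w) * k :=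
        mul_le_of_le_one_right hbase hfactor1
    _ ≤ 6 * a * k := by
        gcongr
        linarith

theorem containsNearClique_of_supportDegGE {n : ℕ} {H : SimpleGraph (Fin n)} {a w k C δ q : ℝ}
    (hw : 0 ≤ w) (hwa : 2 * w ≤ a) (hk : 0 < k) (hC : 0 ≤ C) (hCk : C ≤ k ^ ((1 : ℝ) / 3))
    (hq1 : q ≤ 1) (hqδ : q ≤ 4 * δ ^ ((1 : ℝ) / 2))
    (hH : ∃ G ≤ H, 0 < edgeCount G ∧ SupportDegGE G ((1 - q) * cliqueSide a k)) :
    containsNearClique H δ (nearCliqueSize a w k C) := by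
  obtain ⟨G, hGH, hpos, hdeg⟩ := hH
  refine ⟨G, hGH, hpos, fun v hv => le_trans ?_ (hdeg v hv)⟩
  have hsqrt : 0 ≤ (2 * nearCliqueSize a w k C) ^ ((1 : ℝ) / 2) := by
    rw [← Real.sqrt_eq_rpow]
    exact Real.sqrt_nonneg _
  calc (1 - 4 * δ ^ ((1 : ℝ) / 2)) * (2 * nearCliqueSize a w k C) ^ ((1 : ℝ) / 2)
      ≤ (1 - q) * (2 * nearCliqueSize a w k C) ^ ((1 : ℝ) / 2) := by gcongr
    _ ≤ (1 - q) * cliqueSide a k :=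
        mul_le_mul_of_nonneg_left (sqrt_two_mul_nearCliqueSize_le hw hwa hk hC hCk)
          (sub_nonneg.2 hq1)

theorem nearCliqueError_nonneg {C' p w k : ℝ} (n : ℕ) (hC' : 1 ≤ C') (hw : 0 < w) (hw1 : w ≤ 1)
    (hk : 0 ≤ k) (hp : 1 ≤ Real.log (1 / p)) : 0 ≤ nearCliqueError C' p w k n := by
  have hpow : 1 ≤ w ^ (-(5 : ℝ)) := Real.one_le_rpow_of_pos_of_le_one_of_nonpos hw hw1 (by norm_num)
  have hlog : 0 ≤ Real.log (C' * w ^ (-(5 : ℝ)) * Real.log (1 / p) ^ 3) :=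
    Real.log_nonneg (one_le_mul_of_one_le_of_one_le (one_le_mul_of_one_le_of_one_le hC' hpow)
      (one_le_pow₀ hp))
  unfold nearCliqueError
  positivity

theorem entropy_le_nearCliqueError {a p w k : ℝ} (n : ℕ) (ha : 0 < a) (hw : 0 < w) (hk : 0 < k)
    (hp : 0 < Real.log (1 / p)) :
    36 * Real.log n / ((w / a) ^ 2 * cliqueSide a k) +
      (2 + Real.log (6 ^ 5 * Real.log (1 / p) ^ 3 / (w / a) ^ 5)) / Real.log (1 / p) ≤
      nearCliqueError (entropyConst a) p w k n := by
  have hfirst : 36 * a ^ 2 / (6 * a) ^ ((1 : ℝ) / 3) ≤ entropyConst a := by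
    unfold entropyConst
    have : 0 ≤ Real.exp 2 * (6 * a) ^ 5 := by positivity
    linarith
  have hsecond : Real.exp 2 * (6 * a) ^ 5 ≤ entropyConst a := by
    unfold entropyConst
    have : 0 ≤ 36 * a ^ 2 / (6 * a) ^ ((1 : ℝ) / 3) := by positivity
    linarith
  refine add_le_add ?_ ?_
  · calc 36 * Real.log n / ((w / a) ^ 2 * cliqueSide a k)
        = 36 * a ^ 2 / (6 * a) ^ ((1 : ℝ) / 3) * Real.log n / (w ^ 2 * k ^ ((1 : ℝ) / 3)) := by
          rw [cliqueSide_eq_mul ha.le hk.le]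
          field_simp
      _ ≤ _ := by gcongr
  · have hpow : w ^ (-(5 : ℝ)) = (w ^ 5)⁻¹ := by
      rw [Real.rpow_neg hw.le]
      norm_cast
    calc (2 + Real.log (6 ^ 5 * Real.log (1 / p) ^ 3 / (w / a) ^ 5)) / Real.log (1 / p)
        = Real.log (Real.exp 2 * (6 * a) ^ 5 * w ^ (-(5 : ℝ)) * Real.log (1 / p) ^ 3) /
            Real.log (1 / p) := by
          nth_rw 1 [← Real.log_exp 2]
          rw [← Real.log_mul (by positivity) (by positivity), hpow]
          congr 2
          field_simp
      _ ≤ _ := by gcongr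

end NearCliqueParameters

section Asymptotics

theorem tendsto_log_natCast_atTop : Tendsto (fun n : ℕ => Real.log n) atTop atTop :=
  Real.tendsto_log_atTop.comp tendsto_natCast_atTop_atTop

theorem eventually_log_le_mul {q : ℕ → ℝ} {c : ℝ} (hq : ∀ n, 0 < q n)
    (h : Tendsto (fun n : ℕ => Real.log n / q n) atTop (nhds 0)) (hc : 0 < c) :
    ∀ᶠ n : ℕ in atTop, Real.log n ≤ c * q n := by
  filter_upwards [h.eventually_le_const hc] with n hn
  exact (div_le_iff₀ (hq n)).1 hn

theorem tendsto_atTop_of_log_div_sq_mul {w q : ℕ → ℝ} (hw : ∀ n, 0 < w n) (hq : ∀ n, 0 < q n)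
    (hw0 : Tendsto w atTop (nhds 0))
    (h : Tendsto (fun n : ℕ => Real.log n / (w n ^ 2 * q n)) atTop (nhds 0)) :
    Tendsto q atTop atTop := by
  refine tendsto_atTop_mono' atTop ?_ tendsto_log_natCast_atTop
  filter_upwards [hw0.eventually_le_const one_pos,
    eventually_log_le_mul (fun n => mul_pos (pow_pos (hw n) 2) (hq n)) h one_pos] with n hw1 hlog
  calc Real.log n ≤ 1 * (w n ^ 2 * q n) := hlog
    _ = w n ^ 2 * q n := one_mul _
    _ ≤ q n := mul_le_of_le_one_left (hq n).le (pow_le_one₀ (hw n).le hw1)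

theorem log_one_div_div {l : ℝ} (hl : l ≠ 0) {n : ℕ} (hn : 0 < n) :
    Real.log (1 / (l / n)) = Real.log n - Real.log l := by
  rw [one_div_div, Real.log_div (by positivity) hl]

theorem exp_neg_log_one_div {p : ℝ} (hp : 0 < p) : Real.exp (-Real.log (1 / p)) = p := by
  rw [one_div, Real.log_inv, neg_neg, Real.exp_log hp]

theorem tendsto_log_one_div_div {l : ℝ} (hl : l ≠ 0) :
    Tendsto (fun n : ℕ => Real.log (1 / (l / n))) atTop atTop := by
  refine (tendsto_atTop_add_const_right atTop (-Real.log l) tendsto_log_natCast_atTop).congr' ?_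
  filter_upwards [eventually_gt_atTop 0] with n hn
  rw [log_one_div_div hl hn, sub_eq_add_neg]

theorem eventually_log_one_div_div_le {l : ℝ} (hl : l ≠ 0) :
    ∀ᶠ n : ℕ in atTop, Real.log (1 / (l / n)) ≤ 2 * Real.log n := by
  filter_upwards [eventually_gt_atTop 0,
    tendsto_log_natCast_atTop.eventually_ge_atTop (-Real.log l)] with n hn hlog
  rw [log_one_div_div hl hn]
  linarith

theorem eventually_background_le {l : ℝ} {ω s : ℕ → ℝ} (hl : 0 < l) (hω : ∀ n, 0 < ω n)
    (hs : ∀ n, 0 < s n) (hω0 : Tendsto ω atTop (nhds 0))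
    (h : Tendsto (fun n : ℕ => Real.log n / (ω n ^ 2 * s n)) atTop (nhds 0)) :
    ∀ᶠ n : ℕ in atTop,
      l * (6 * s n ^ 2 * Real.log (1 / (l / n)) / ω n) + l ^ 3 ≤ ω n * s n ^ 3 / 6 := by
  have hsTop := tendsto_atTop_of_log_div_sq_mul hω hs hω0 h
  have hlog := fun {c : ℝ} (hc : 0 < c) =>
    eventually_log_le_mul (fun n => mul_pos (pow_pos (hω n) 2) (hs n)) h hc
  filter_upwards [hlog one_pos, hlog (show 0 < 1 / (144 * l) by positivity),
    eventually_log_one_div_div_le hl.ne', hω0.eventually_le_const one_pos,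
    hsTop.eventually_ge_atTop 1, tendsto_log_natCast_atTop.eventually_ge_atTop (12 * l ^ 3)]
    with n hlog1 hlogl hL hω1 hs1 hlarge
  have hωn := hω n
  have hseed : l * (6 * s n ^ 2 * Real.log (1 / (l / n)) / ω n) ≤ ω n * s n ^ 3 / 12 := by
    calc l * (6 * s n ^ 2 * Real.log (1 / (l / n)) / ω n)
        ≤ l * (6 * s n ^ 2 * (2 * (1 / (144 * l) * (ω n ^ 2 * s n))) / ω n) := by
          gcongr
          linarith
      _ = ω n * s n ^ 3 / 12 := by
          field_simp
          norm_num
  have hfree : 12 * l ^ 3 ≤ ω n * s n ^ 3 := by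
    calc 12 * l ^ 3 ≤ 1 * (ω n ^ 2 * s n) := hlarge.trans hlog1
      _ = ω n ^ 2 * s n := one_mul _
      _ ≤ ω n * s n ^ 3 := by
        gcongr
        · exact pow_le_of_le_one hωn.le hω1 two_ne_zero
        · exact le_self_pow₀ hs1 three_ne_zero
  linarith

variable {l a C' : ℝ} {k w : ℕ → ℝ}

theorem tendsto_cliqueSide (ha : 0 < a) (hk : ∀ n, 0 < k n)
    (hroot : Tendsto (fun n => k n ^ ((1 : ℝ) / 3)) atTop atTop) :
    Tendsto (fun n => cliqueSide a (k n)) atTop atTop := by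
  simp only [cliqueSide_eq_mul ha.le (hk _).le]
  exact hroot.const_mul_atTop (by positivity)

theorem tendsto_log_div_width_sq_mul_cliqueSide (ha : 0 < a) (hk : ∀ n, 0 < k n)
    (hψ : Tendsto (fun n : ℕ => Real.log n / (w n ^ 2 * k n ^ ((1 : ℝ) / 3))) atTop (nhds 0)) :
    Tendsto (fun n : ℕ => Real.log n / ((w n / a) ^ 2 * cliqueSide a (k n))) atTop (nhds 0) := by
  have hconst := hψ.const_mul (a ^ 2 / (6 * a) ^ ((1 : ℝ) / 3))
  rw [mul_zero] at hconst
  refine hconst.congr fun n => ?_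
  rw [cliqueSide_eq_mul ha.le (hk n).le, div_pow, div_mul_div_comm]
  field_simp

theorem tendsto_nearCliqueError (hl : l ≠ 0) (hC' : 0 < C') (hw : ∀ n, 0 < w n)
    (hψ : Tendsto (fun n : ℕ => Real.log n / (w n ^ 2 * k n ^ ((1 : ℝ) / 3))) atTop (nhds 0))
    (hlog : Tendsto (fun n : ℕ => Real.log (w n) / Real.log (1 / (l / n))) atTop (nhds 0)) :
    Tendsto (fun n : ℕ => nearCliqueError C' (l / n) (w n) (k n) n) atTop (nhds 0) := by
  have hL := tendsto_log_one_div_div hl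
  have hloglog : Tendsto (fun n : ℕ => Real.log (Real.log (1 / (l / n))) / Real.log (1 / (l / n)))
      atTop (nhds 0) := Real.isLittleO_log_id_atTop.tendsto_div_nhds_zero.comp hL
  have hsum := (hψ.const_mul C').add
    (((hL.const_div_atTop (Real.log C')).add (hlog.const_mul (-5))).add (hloglog.const_mul 3))
  simp only [mul_zero, add_zero] at hsum
  refine hsum.congr' ?_
  filter_upwards [hL.eventually_ge_atTop 1] with n hLn
  have hwn := hw n
  rw [nearCliqueError, Real.log_mul (by positivity) (by positivity),
    Real.log_mul (by positivity) (by positivity), Real.log_rpow hwn, Real.log_pow]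
  push_cast
  ring

theorem eventually_sparseRegime (hl : 0 < l) (ha : 0 < a) (hk : ∀ n, 0 < k n)
    (hw : ∀ n, 0 < w n) (hw0 : Tendsto w atTop (nhds 0))
    (hψ : Tendsto (fun n : ℕ => Real.log n / (w n ^ 2 * k n ^ ((1 : ℝ) / 3))) atTop (nhds 0))
    (hlog : Tendsto (fun n : ℕ => Real.log (w n) / Real.log (1 / (l / n))) atTop (nhds 0)) :
    ∀ᶠ n : ℕ in atTop, SparseRegime n (Real.log (1 / (l / n))) (cliqueSide a (k n)) (w n / a)
      ((1 + 1 / a) * (nearCliqueError (entropyConst a) (l / n) (w n) (k n) n + w n)) := by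
  have hC' := one_le_entropyConst ha.le
  have herror := ((tendsto_nearCliqueError hl.ne' (one_pos.trans_le hC') hw hψ hlog).add
    hw0).const_mul (289 * (1 + 1 / a))
  rw [add_zero, mul_zero] at herror
  have hω0 : Tendsto (fun n => w n / a) atTop (nhds 0) := by simpa using hw0.div_const a
  have hbackground := eventually_background_le hl (fun n => div_pos (hw n) ha)
    (fun n => cliqueSide_pos ha (hk n)) hω0 (tendsto_log_div_width_sq_mul_cliqueSide ha hk hψ)
  filter_upwards [eventually_gt_atTop 0, (tendsto_log_one_div_div hl.ne').eventually_ge_atTop 1,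
    tendsto_log_natCast_atTop.eventually_ge_atTop 1, hw0.eventually_le_const one_pos,
    hω0.eventually_le_const one_pos, herror.eventually_lt_const one_pos, hbackground]
    with n hn hL hlogn hw1 hω1 hsmall hback
  have hlp : 0 < l / n := by positivity
  have hwn := hw n
  have hs := cliqueSide_pos ha (hk n)
  set ψ := nearCliqueError (entropyConst a) (l / n) (w n) (k n) n
  have hψ0 : 0 ≤ ψ := nearCliqueError_nonneg n hC' hwn hw1 (hk n).le hL
  have hψε : ψ ≤ (1 + 1 / a) * (ψ + w n) := by
    have : 0 ≤ 1 / a * (ψ + w n) := by positivity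
    linarith
  have hentropy := entropy_le_nearCliqueError n ha hwn (hk n) (one_pos.trans_le hL)
  refine ⟨hn, hL, by positivity, ?_, by rwa [← mul_assoc], ?_, ?_, hentropy.trans hψε⟩
  · have : 0 ≤ ψ + w n + 1 / a * ψ := by positivity
    linarith [div_eq_mul_one_div (w n) a]
  · have hvertices : 36 * Real.log n / ((w n / a) ^ 2 * cliqueSide a (k n)) ≤ ψ := by
      refine le_trans (le_add_of_nonneg_right (div_nonneg ?_ (zero_le_one.trans hL))) hentropy
      linarith [log_entropy_ratio_nonneg hL (div_pos hwn ha) hω1]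
    rw [div_le_iff₀ (by positivity)] at hvertices
    calc 15 ≤ 36 * Real.log n := by linarith
      _ ≤ ψ * ((w n / a) ^ 2 * cliqueSide a (k n)) := hvertices
      _ ≤ ψ * (1 * cliqueSide a (k n)) := by
        gcongr
        exact pow_le_one₀ (by positivity) hω1
      _ = ψ * cliqueSide a (k n) := by rw [one_mul]
      _ ≤ (1 + 1 / a) * (ψ + w n) * cliqueSide a (k n) := by gcongr
  · rwa [exp_neg_log_one_div hlp, div_mul_cancel₀ l (by positivity)]

theorem tendsto_three_mul_exp_neg_sq_div_four {s : ℕ → ℝ} (hs : Tendsto s atTop atTop) :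
    Tendsto (fun n => 3 * Real.exp (-(s n ^ 2 / 4))) atTop (nhds 0) := by
  have hsq : Tendsto (fun n => s n ^ 2 / 4) atTop atTop :=
    ((tendsto_pow_atTop two_ne_zero).comp hs).atTop_div_const (by norm_num)
  simpa using (Real.tendsto_exp_neg_atTop_nhds_zero.comp hsq).const_mul 3

theorem condProb_not_containsNearClique_le {n : ℕ} {p ω ε x a w k C : ℝ} (ha : 0 ≤ a) (hw : 0 ≤ w)
    (hwa : 2 * w ≤ a) (hk : 0 < k) (hC : 0 ≤ C) (hCk : C ≤ k ^ ((1 : ℝ) / 3)) (hp : 0 < p)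
    (h : SparseRegime n (Real.log (1 / p)) (cliqueSide a k) ω ε) (hx : 17 ^ 2 * ε = 4 ^ 2 * x) :
    condProb n p {H | ¬ containsNearClique H x (nearCliqueSize a w k C)}
      {H | a * k ≤ triangleCount H} ≤ 3 * Real.exp (-(cliqueSide a k ^ 2 / 4)) := by
  have hsqrt : 17 * √ε = 4 * x ^ ((1 : ℝ) / 2) := by
    rw [← Real.sqrt_eq_rpow, ← Real.sqrt_sq (show (0 : ℝ) ≤ 17 by norm_num), ← Real.sqrt_mul',
      hx, Real.sqrt_mul (by positivity), Real.sqrt_sq (by norm_num)]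
    exact h.error_pos.le
  have htriangles : cliqueSide a k ^ 3 / 6 = a * k := by
    rw [cliqueSide_pow_three ha hk.le]
    ring
  have hbound := h.condProb_le fun H (hH : ¬ containsNearClique H x (nearCliqueSize a w k C)) hG =>
    hH (containsNearClique_of_supportDegGE hw hwa hk hC hCk h.sqrt_error_lt.le hsqrt.le hG)
  rwa [htriangles, exp_neg_log_one_div hp] at hbound

end Asymptotics

/-- **Existence of a near-clique conditionally on many triangles.** -/
theorem near_clique_conditional (l a : ℝ) (hl : 0 < l) (ha : 0 < a) :
    ∃ C' : ℝ, 0 < C' ∧ ∀ δ : ℝ, 0 < δ →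
      ∀ k w : ℕ → ℝ, (∀ n, 0 < k n) → (∀ n, 0 < w n) →
        Tendsto w atTop (nhds 0) →
        Tendsto (fun n : ℕ => Real.log n / ((w n) ^ 2 * (k n) ^ ((1 : ℝ) / 3))) atTop (nhds 0) →
        Tendsto (fun n : ℕ => Real.log (w n) / Real.log (1 / (l / n))) atTop (nhds 0) →
        ∃ C : ℝ, 0 < C ∧ ∃ n₀ : ℕ, ∀ n ≥ n₀,
          condProb n (l / n)
              {H | ¬ containsNearClique H
                  (C * ((C' * Real.log n / ((w n) ^ 2 * (k n) ^ ((1 : ℝ) / 3)) +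
                      Real.log (C' * (w n) ^ (-(5 : ℝ)) * (Real.log (1 / (l / n))) ^ 3) /
                        Real.log (1 / (l / n))) + w n))
                  ((1 / 2) * (6 * (a - 2 * w n) * k n *
                    (1 - C * (k n) ^ (-(1 : ℝ) / 3))) ^ ((2 : ℝ) / 3))}
              {H | a * k n ≤ (triangleCount H : ℝ)} ≤ δ := by
  refine ⟨entropyConst a, one_pos.trans_le (one_le_entropyConst ha.le),
    fun δ hδ k w hk hw hw0 hψ hlog =>
      ⟨289 / 16 * (1 + 1 / a), by positivity, eventually_atTop.1 ?_⟩⟩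
  have hroot := tendsto_atTop_of_log_div_sq_mul hw (fun n => Real.rpow_pos_of_pos (hk n) _) hw0 hψ
  have hdecay := tendsto_three_mul_exp_neg_sq_div_four (tendsto_cliqueSide ha hk hroot)
  filter_upwards [eventually_sparseRegime hl ha hk hw hw0 hψ hlog, hdecay.eventually_le_const hδ,
    hw0.eventually_le_const (half_pos ha),
    hroot.eventually_ge_atTop (289 / 16 * (1 + 1 / a))] with n hregime hδn hwa hCk
  have := hregime.pos
  refine (condProb_not_containsNearClique_le ha.le (hw n).le (by linarith) (hk n) (by positivity)
    hCk (by positivity) hregime ?_).trans hδn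
  rw [nearCliqueError]
  ring
end
end

section
/- Fix λ > 0 and set p_n = λ/n. There exists n₀ (depending only on λ) such that for all n ≥ n₀, every integer k ≥ 0 divisible by 3, and every set S ⊆ [n] with |S| = k: P(𝒯_S) ≥ [ k! / ( (3!)^{k/3} · (k/3)! ) ] · p_n^k · (1 − p_n)^{ binom(k,2) − k + (n−k)k } · (9/10) · e^{−λ³/6}, where 𝒯_S is the event that the induced subgraph of G_{n,p_n} on S has edge set equal to a union of k/3 pairwise vertex-disjoint triangles covering S (and no other edges inside S), and the graph obtained from G_{n,p_n} by deleting all edges with both endpoints in S contains no triangle. -/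
open scoped BigOperators Classical
open Finset Filter

noncomputable section

/-!
Split the pairs of vertices into those meeting `S` and those inside `Sᶜ`; the two sets of edges are
independent. The pairs meeting `S` have to form exactly a union of triangles on the blocks of a
partition of `S` into triples. Distinct partitions give distinct edge sets, each with `k` edges, so
all are equally likely, and there are `k! / (3! ^ (k / 3) * (k / 3)!)` of them. Then the remaining
graph is triangle-free as soon as `Sᶜ` spans no triangle. For each triple of `Sᶜ`, not being a
triangle is a decreasing event of probability `1 - p ^ 3`, so by Harris's inequality all of them
occur with probability at least `(1 - p ^ 3) ^ (n - k).choose 3 ≥ (1 - p ^ 3) ^ (n ^ 3 / 6)`, which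
tends to `exp (-(l ^ 3 / 6))` for `p = l / n`.
-/

lemma add_choose_two (a b : ℕ) : (a + b).choose 2 = a.choose 2 + b * a + b.choose 2 := by
  simp only [Nat.add_choose_eq, Nat.sum_antidiagonal_eq_sum_range_succ_mk, sum_range_succ,
    sum_range_zero, tsub_self, tsub_zero, Nat.choose_zero_right, Nat.choose_one_right,
    Nat.add_one_sub_one]
  ring

lemma le_choose_two_of_three_dvd {k : ℕ} (hk : 3 ∣ k) : k ≤ k.choose 2 := by
  rw [Nat.choose_two_right, Nat.le_div_iff_mul_le two_pos]
  rcases k.eq_zero_or_pos with rfl | hpos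
  · simp
  · exact Nat.mul_le_mul_left k (by have := Nat.le_of_dvd hpos hk; lia)

lemma cast_uniformBell {r : ℕ} (hr : r ≠ 0) (m : ℕ) :
    (Nat.uniformBell m r : ℝ) = (m * r).factorial / (r.factorial ^ m * m.factorial) := by
  rw [eq_div_iff (by positivity), ← mul_assoc]
  exact_mod_cast Nat.uniformBell_mul_eq m hr

section BernoulliSubset

variable {α : Type*} {U : Finset α} {p : ℝ}

/-- The probability that the `p`-random subset of `U`, which contains each element of `U`
independently with probability `p`, equals `A`. Only meaningful for `A ⊆ U`. -/
def bernoulliWeight (U : Finset α) (p : ℝ) (A : Finset α) : ℝ :=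
  p ^ #A * (1 - p) ^ (#U - #A)

/-- The probability that the `p`-random subset of `U` belongs to the family `𝒜`; members of `𝒜`
that are not subsets of `U` do not contribute. -/
def bernoulliProb (U : Finset α) (p : ℝ) (𝒜 : Set (Finset α)) : ℝ :=
  ∑ A ∈ U.powerset, 𝒜.indicator (bernoulliWeight U p) A

lemma bernoulliWeight_nonneg (hp₀ : 0 ≤ p) (hp₁ : p ≤ 1) (A : Finset α) :
    0 ≤ bernoulliWeight U p A :=
  mul_nonneg (pow_nonneg hp₀ _) (pow_nonneg (sub_nonneg.2 hp₁) _)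

lemma bernoulliWeight_inter_mul_union [DecidableEq α] {A B : Finset α} (hA : A ⊆ U) (hB : B ⊆ U) :
    bernoulliWeight U p (A ∩ B) * bernoulliWeight U p (A ∪ B) =
      bernoulliWeight U p A * bernoulliWeight U p B := by
  have hcard : #(A ∩ B) + #(A ∪ B) = #A + #B := card_inter_add_card_union A B
  have hcompl : #U - #(A ∩ B) + (#U - #(A ∪ B)) = #U - #A + (#U - #B) := by
    have := card_le_card hA
    have := card_le_card hB
    have := card_le_card (union_subset hA hB)
    have := card_le_card (inter_subset_left.trans hA : A ∩ B ⊆ U)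
    omega
  simp only [bernoulliWeight]
  rw [mul_mul_mul_comm, ← pow_add, ← pow_add, hcard, hcompl, pow_add, pow_add, mul_mul_mul_comm]

lemma bernoulliWeight_union_mul [DecidableEq α] {U W A B : Finset α} (hUW : Disjoint U W)
    (hA : A ⊆ U) (hB : B ⊆ W) :
    bernoulliWeight (U ∪ W) p (A ∪ B) = bernoulliWeight U p A * bernoulliWeight W p B := by
  have hcompl : #U + #W - (#A + #B) = #U - #A + (#W - #B) := by
    have := card_le_card hA
    have := card_le_card hB
    omega
  rw [bernoulliWeight, bernoulliWeight, bernoulliWeight, card_union_of_disjoint hUW,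
    card_union_of_disjoint (hUW.mono hA hB), hcompl, pow_add, pow_add, mul_mul_mul_comm]

lemma bernoulliProb_univ : bernoulliProb U p Set.univ = 1 := by
  simp [bernoulliProb, bernoulliWeight, sum_pow_mul_eq_add_pow]

lemma bernoulliProb_compl (𝒜 : Set (Finset α)) :
    bernoulliProb U p 𝒜ᶜ = 1 - bernoulliProb U p 𝒜 := by
  rw [← bernoulliProb_univ (U := U) (p := p), eq_sub_iff_add_eq']
  simp only [bernoulliProb, ← sum_add_distrib, Set.indicator_self_add_compl_apply,
    Set.indicator_univ]

lemma bernoulliProb_nonneg (hp₀ : 0 ≤ p) (hp₁ : p ≤ 1) (𝒜 : Set (Finset α)) :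
    0 ≤ bernoulliProb U p 𝒜 :=
  sum_nonneg fun _ _ ↦ Set.indicator_nonneg (fun A _ ↦ bernoulliWeight_nonneg hp₀ hp₁ A) _

lemma bernoulliProb_mono (hp₀ : 0 ≤ p) (hp₁ : p ≤ 1) {𝒜 ℬ : Set (Finset α)}
    (h : ∀ A ⊆ U, A ∈ 𝒜 → A ∈ ℬ) : bernoulliProb U p 𝒜 ≤ bernoulliProb U p ℬ := by
  have hw (A : Finset α) : 0 ≤ bernoulliWeight U p A := bernoulliWeight_nonneg hp₀ hp₁ A
  refine sum_le_sum fun A hA ↦ ?_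
  exact Set.indicator_apply_le'
    (fun h𝒜 ↦ (Set.indicator_of_mem (h A (mem_powerset.1 hA) h𝒜) _).ge)
    fun _ ↦ Set.indicator_nonneg (fun A _ ↦ hw A) _

lemma bernoulliProb_of_subset_powersetCard {𝒜 : Finset (Finset α)} {j : ℕ}
    (h𝒜 : 𝒜 ⊆ U.powersetCard j) :
    bernoulliProb U p 𝒜 = #𝒜 * (p ^ j * (1 - p) ^ (#U - j)) := by
  have h𝒜U : 𝒜 ⊆ U.powerset := fun A hA ↦ mem_powerset.2 (mem_powersetCard.1 (h𝒜 hA)).1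
  rw [bernoulliProb, sum_indicator_subset _ h𝒜U, ← nsmul_eq_mul]
  refine sum_eq_card_nsmul fun A hA ↦ ?_
  rw [bernoulliWeight, (mem_powersetCard.1 (h𝒜 hA)).2]

lemma bernoulliProb_union_inter [DecidableEq α] {U W : Finset α} (hUW : Disjoint U W)
    (𝒜 ℬ : Set (Finset α)) :
    bernoulliProb (U ∪ W) p {A | A ∩ U ∈ 𝒜 ∧ A ∩ W ∈ ℬ} =
      bernoulliProb U p 𝒜 * bernoulliProb W p ℬ := by
  have inter_left {A B : Finset α} (hA : A ⊆ U) (hB : B ⊆ W) : (A ∪ B) ∩ U = A := by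
    rw [union_inter_distrib_right, inter_eq_left.2 hA,
      disjoint_iff_inter_eq_empty.1 (hUW.symm.mono_left hB), union_empty]
  have inter_right {A B : Finset α} (hA : A ⊆ U) (hB : B ⊆ W) : (A ∪ B) ∩ W = B := by
    rw [union_inter_distrib_right, inter_eq_left.2 hB,
      disjoint_iff_inter_eq_empty.1 (hUW.mono_left hA), empty_union]
  rw [bernoulliProb, bernoulliProb, bernoulliProb, sum_mul_sum, ← sum_product']
  refine sum_nbij' (fun A ↦ (A ∩ U, A ∩ W)) (fun x ↦ x.1 ∪ x.2) ?_ ?_ ?_ ?_ ?_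
  · intro A _
    simp
  · rintro ⟨A, B⟩ hAB
    rw [mem_product, mem_powerset, mem_powerset] at hAB
    exact mem_powerset.2 (union_subset_union hAB.1 hAB.2)
  · intro A hA
    rw [← inter_union_distrib_left, inter_eq_left.2 (mem_powerset.1 hA)]
  · rintro ⟨A, B⟩ hAB
    rw [mem_product, mem_powerset, mem_powerset] at hAB
    simp only [inter_left hAB.1 hAB.2, inter_right hAB.1 hAB.2]
  · intro A hA
    have hweight := bernoulliWeight_union_mul (p := p) hUW (inter_subset_right (s₁ := A))
      (inter_subset_right (s₁ := A))
    rw [← inter_union_distrib_left, inter_eq_left.2 (mem_powerset.1 hA)] at hweight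
    simp only [Set.indicator_apply, Set.mem_ofPred_eq, ite_zero_mul_ite_zero, hweight]

lemma bernoulliProb_superset {T : Finset α} (hT : T ⊆ U) :
    bernoulliProb U p {A | T ⊆ A} = p ^ #T := by
  have hT_only : bernoulliProb T p {T} = p ^ #T := by
    simpa using bernoulliProb_of_subset_powersetCard (p := p)
      (singleton_subset_iff.2 (mem_powersetCard.2 ⟨Subset.refl T, rfl⟩))
  have h := bernoulliProb_union_inter (p := p) (disjoint_sdiff (s := T) (t := U)) {T} Set.univ
  rw [union_sdiff_of_subset hT, bernoulliProb_univ, mul_one, hT_only] at h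
  simpa using h

lemma bernoulliProb_mul_le_inter (hp₀ : 0 ≤ p) (hp₁ : p ≤ 1) {𝒜 ℬ : Set (Finset α)}
    (h𝒜 : IsLowerSet 𝒜) (hℬ : IsLowerSet ℬ) :
    bernoulliProb U p 𝒜 * bernoulliProb U p ℬ ≤ bernoulliProb U p (𝒜 ∩ ℬ) := by
  set w := bernoulliWeight U p
  have hw (A : Finset α) : 0 ≤ w A := bernoulliWeight_nonneg hp₀ hp₁ A
  have hind (𝒞 : Set (Finset α)) : 0 ≤ 𝒞.indicator w := Set.indicator_nonneg fun A _ ↦ hw A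
  have hfour : ∀ ⦃A⦄, A ⊆ U → ∀ ⦃B⦄, B ⊆ U →
      𝒜.indicator w A * ℬ.indicator w B ≤ (𝒜 ∩ ℬ).indicator w (A ∩ B) * w (A ∪ B) := by
    intro A hA B hB
    by_cases hAB : A ∈ 𝒜 ∧ B ∈ ℬ
    · have hinter : A ∩ B ∈ 𝒜 ∩ ℬ := ⟨h𝒜 inter_subset_left hAB.1, hℬ inter_subset_right hAB.2⟩
      rw [Set.indicator_of_mem hAB.1, Set.indicator_of_mem hAB.2, Set.indicator_of_mem hinter]
      exact (bernoulliWeight_inter_mul_union hA hB).ge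
    · have hzero : 𝒜.indicator w A * ℬ.indicator w B = 0 := by
        simp only [Set.indicator_apply, ite_zero_mul_ite_zero, if_neg hAB]
      rw [hzero]
      exact mul_nonneg (hind _ _) (hw _)
  calc bernoulliProb U p 𝒜 * bernoulliProb U p ℬ
      ≤ bernoulliProb U p (𝒜 ∩ ℬ) * ∑ A ∈ U.powerset, w A := by
        simpa only [bernoulliProb, powerset_infs_powerset_self, powerset_sups_powerset_self] using
          Finset.four_functions_theorem U (hind 𝒜) (hind ℬ) (hind (𝒜 ∩ ℬ)) hw hfour
            Subset.rfl Subset.rfl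
    _ = bernoulliProb U p (𝒜 ∩ ℬ) := by
        rw [← Set.indicator_univ w, ← bernoulliProb, bernoulliProb_univ, mul_one]

lemma prod_bernoulliProb_le_iInter {ι : Type*} (hp₀ : 0 ≤ p) (hp₁ : p ≤ 1) (I : Finset ι)
    {𝒜 : ι → Set (Finset α)} (h𝒜 : ∀ i, IsLowerSet (𝒜 i)) :
    ∏ i ∈ I, bernoulliProb U p (𝒜 i) ≤ bernoulliProb U p (⋂ i ∈ I, 𝒜 i) := by
  induction I using Finset.induction_on with
  | empty => simp [bernoulliProb_univ]
  | insert i I hi ih =>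
    rw [prod_insert hi, set_biInter_insert]
    exact (mul_le_mul_of_nonneg_left ih (bernoulliProb_nonneg hp₀ hp₁ _)).trans
      (bernoulliProb_mul_le_inter hp₀ hp₁ (h𝒜 i) (isLowerSet_iInter₂ fun j _ ↦ h𝒜 j))

lemma prod_one_sub_pow_card_le_bernoulliProb {ι : Type*} (hp₀ : 0 ≤ p) (hp₁ : p ≤ 1)
    {I : Finset ι} {T : ι → Finset α} (hT : ∀ i ∈ I, T i ⊆ U) :
    ∏ i ∈ I, (1 - p ^ #(T i)) ≤ bernoulliProb U p {A | ∀ i ∈ I, ¬ T i ⊆ A} := by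
  have hlower (i : ι) : IsLowerSet {A | T i ⊆ A}ᶜ :=
    IsUpperSet.compl fun _ _ hAB hA ↦ hA.trans hAB
  calc ∏ i ∈ I, (1 - p ^ #(T i))
      = ∏ i ∈ I, bernoulliProb U p {A | T i ⊆ A}ᶜ :=
        prod_congr rfl fun i hi ↦ by rw [bernoulliProb_compl, bernoulliProb_superset (hT i hi)]
    _ ≤ bernoulliProb U p (⋂ i ∈ I, {A | T i ⊆ A}ᶜ) :=
        prod_bernoulliProb_le_iInter hp₀ hp₁ I hlower
    _ = bernoulliProb U p {A | ∀ i ∈ I, ¬ T i ⊆ A} := by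
        congr 1
        ext A
        simp

end BernoulliSubset

section Cliques

variable {V : Type*} [DecidableEq V]

/-- The edge set of the complete graph on the vertex set `s`, as a finset. -/
def cliqueEdges (s : Finset V) : Finset (Sym2 V) := {e ∈ s.sym2 | ¬ e.IsDiag}

lemma mk_mem_cliqueEdges {s : Finset V} {u v : V} :
    s(u, v) ∈ cliqueEdges s ↔ u ∈ s ∧ v ∈ s ∧ u ≠ v := by
  simp [cliqueEdges, and_assoc]

lemma card_cliqueEdges (s : Finset V) : #(cliqueEdges s) = (#s).choose 2 := by
  rw [cliqueEdges, sym2_eq_image, Sym2.filter_image_mk_not_isDiag, Sym2.card_image_offDiag]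

lemma cliqueEdges_mono : Monotone (cliqueEdges : Finset V → Finset (Sym2 V)) :=
  fun _ _ h ↦ filter_subset_filter _ (sym2_mono h)

lemma disjoint_cliqueEdges {s t : Finset V} (h : Disjoint s t) :
    Disjoint (cliqueEdges s) (cliqueEdges t) := by
  rw [Finset.disjoint_left]
  rintro ⟨u, v⟩ hs ht
  exact Finset.disjoint_left.1 h (mk_mem_cliqueEdges.1 hs).1 (mk_mem_cliqueEdges.1 ht).1

lemma fromEdgeSet_adj_iff_mem {s : Finset V} {E : Finset (Sym2 V)} (hE : E ⊆ cliqueEdges s)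
    {u v : V} : (SimpleGraph.fromEdgeSet (E : Set (Sym2 V))).Adj u v ↔ s(u, v) ∈ E := by
  rw [SimpleGraph.fromEdgeSet_adj, mem_coe, and_iff_left_iff_imp]
  exact fun h ↦ (mk_mem_cliqueEdges.1 (hE h)).2.2

lemma isClique_fromEdgeSet_iff {E : Finset (Sym2 V)} {t : Finset V} :
    (SimpleGraph.fromEdgeSet (E : Set (Sym2 V))).IsClique t ↔ cliqueEdges t ⊆ E := by
  simp only [SimpleGraph.isClique_iff, Set.Pairwise, SimpleGraph.fromEdgeSet_adj, mem_coe]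
  constructor
  · rintro h ⟨u, v⟩ huv
    obtain ⟨hu, hv, hne⟩ := mk_mem_cliqueEdges.1 huv
    exact (h hu hv hne).1
  · exact fun h u hu v hv hne ↦ ⟨h (mk_mem_cliqueEdges.2 ⟨hu, hv, hne⟩), hne⟩

lemma subset_of_cliqueEdges_subset {s t : Finset V} (ht : 2 ≤ #t)
    (h : cliqueEdges t ⊆ cliqueEdges s) : t ⊆ s := by
  intro u hu
  obtain ⟨v, hv, hne⟩ := exists_mem_ne ht u
  exact (mk_mem_cliqueEdges.1 (h (mk_mem_cliqueEdges.2 ⟨hu, hv, hne.symm⟩))).1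

lemma cliqueFree_fromEdgeSet_iff {r : ℕ} (hr : 2 ≤ r) {s : Finset V} {E : Finset (Sym2 V)}
    (hE : E ⊆ cliqueEdges s) :
    (SimpleGraph.fromEdgeSet (E : Set (Sym2 V))).CliqueFree r ↔
      ∀ t ∈ s.powersetCard r, ¬ cliqueEdges t ⊆ E := by
  simp only [SimpleGraph.CliqueFree, SimpleGraph.isNClique_iff, isClique_fromEdgeSet_iff,
    mem_powersetCard]
  constructor
  · exact fun h t ht htE ↦ h t ⟨htE, ht.2⟩
  · rintro h t ⟨htE, rfl⟩
    exact h t ⟨subset_of_cliqueEdges_subset hr (htE.trans hE), rfl⟩ htE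

lemma one_sub_pow_choose_le_bernoulliProb_cliqueFree {p : ℝ} (hp₀ : 0 ≤ p) (hp₁ : p ≤ 1) {r : ℕ}
    (hr : 2 ≤ r) (s : Finset V) :
    (1 - p ^ r.choose 2) ^ (#s).choose r ≤ bernoulliProb (cliqueEdges s) p
      {E | (SimpleGraph.fromEdgeSet (E : Set (Sym2 V))).CliqueFree r} := by
  have hsub : ∀ t ∈ s.powersetCard r, cliqueEdges t ⊆ cliqueEdges s :=
    fun t ht ↦ cliqueEdges_mono (mem_powersetCard.1 ht).1
  calc (1 - p ^ r.choose 2) ^ (#s).choose r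
      = ∏ t ∈ s.powersetCard r, (1 - p ^ #(cliqueEdges t)) := by
        rw [← card_powersetCard, ← prod_const]
        exact prod_congr rfl fun t ht ↦ by rw [card_cliqueEdges, (mem_powersetCard.1 ht).2]
    _ ≤ bernoulliProb (cliqueEdges s) p {E | ∀ t ∈ s.powersetCard r, ¬ cliqueEdges t ⊆ E} :=
        prod_one_sub_pow_card_le_bernoulliProb hp₀ hp₁ hsub
    _ ≤ _ := bernoulliProb_mono hp₀ hp₁ fun E hE ↦ (cliqueFree_fromEdgeSet_iff hr hE).2

lemma card_cliqueEdges_univ_sdiff_compl [Fintype V] (S : Finset V) :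
    #(cliqueEdges univ \ cliqueEdges Sᶜ) =
      (#S).choose 2 + (Fintype.card V - #S) * #S := by
  have hcard : Fintype.card V = #S + (Fintype.card V - #S) :=
    (Nat.add_sub_cancel' (card_le_univ S)).symm
  rw [card_sdiff_of_subset (cliqueEdges_mono (subset_univ _)), card_cliqueEdges,
    card_cliqueEdges, card_univ, card_compl]
  nth_rewrite 1 [hcard]
  rw [add_choose_two, Nat.add_sub_cancel]

end Cliques

section UniformPartitions

variable {V : Type*} [DecidableEq V] {r : ℕ} {S : Finset V} {P : Finset (Finset V)}

/-- The partitions of the vertex set `S` into blocks of size `r`, as a finset. For `r = 0`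
the empty block is allowed. -/
def uniformPartitions (r : ℕ) (S : Finset V) : Finset (Finset (Finset V)) :=
  {P ∈ (S.powersetCard r).powerset | (P : Set (Finset V)).PairwiseDisjoint id ∧ P.biUnion id = S}

lemma mem_uniformPartitions :
    P ∈ uniformPartitions r S ↔
      (∀ t ∈ P, #t = r) ∧ (P : Set (Finset V)).PairwiseDisjoint id ∧ P.biUnion id = S := by
  rw [uniformPartitions, mem_filter, mem_powerset, and_congr_left_iff]
  rintro ⟨-, rfl⟩
  refine forall₂_congr fun t ht ↦ ?_
  exact mem_powersetCard.trans (and_iff_right (subset_biUnion_of_mem id ht))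

lemma uniformPartitions_empty (hr : r ≠ 0) : uniformPartitions r (∅ : Finset V) = {∅} := by
  ext P
  rw [mem_uniformPartitions, mem_singleton]
  constructor
  · rintro ⟨hcard, -, hunion⟩
    refine eq_empty_of_forall_notMem fun t ht ↦ hr ?_
    rw [← hcard t ht, card_eq_zero, ← subset_empty, ← hunion]
    exact subset_biUnion_of_mem id ht
  · rintro rfl
    simp

lemma subset_of_mem_uniformPartitions (hP : P ∈ uniformPartitions r S) {t : Finset V}
    (ht : t ∈ P) : t ⊆ S :=
  (mem_uniformPartitions.1 hP).2.2 ▸ subset_biUnion_of_mem id ht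

lemma exists_mem_block_of_mem_uniformPartitions (hP : P ∈ uniformPartitions r S) {v : V}
    (hv : v ∈ S) : ∃ t ∈ P, v ∈ t :=
  mem_biUnion.1 ((mem_uniformPartitions.1 hP).2.2.symm ▸ hv)

lemma eq_of_mem_uniformPartitions (hP : P ∈ uniformPartitions r S) {s t : Finset V} (hs : s ∈ P)
    (ht : t ∈ P) {v : V} (hvs : v ∈ s) (hvt : v ∈ t) : s = t :=
  (mem_uniformPartitions.1 hP).2.1.elim_finset hs ht v hvs hvt

lemma card_mul_of_mem_uniformPartitions (hP : P ∈ uniformPartitions r S) : #P * r = #S := by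
  obtain ⟨hcard, hdisj, rfl⟩ := mem_uniformPartitions.1 hP
  exact (card_biUnion hdisj).trans (sum_const_nat hcard) |>.symm

lemma insert_mem_uniformPartitions_iff {t : Finset V} (ht : t ∉ P) :
    insert t P ∈ uniformPartitions r S ↔ #t = r ∧ t ⊆ S ∧ P ∈ uniformPartitions r (S \ t) := by
  simp only [mem_uniformPartitions, forall_mem_insert, coe_insert, biUnion_insert, id,
    Set.pairwiseDisjoint_insert_of_notMem (mem_coe.not.2 ht)]
  have hunion (hdisj : ∀ s ∈ P, Disjoint t s) : Disjoint t (P.biUnion id) :=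
    (disjoint_biUnion_right _ _ _).2 hdisj
  constructor
  · rintro ⟨⟨htr, hcard⟩, ⟨hdisj, hdisjt⟩, rfl⟩
    refine ⟨htr, subset_union_left, hcard, hdisj, ?_⟩
    rw [union_sdiff_cancel_left (hunion hdisjt)]
  · rintro ⟨htr, htS, hcard, hdisj, hunionP⟩
    refine ⟨⟨htr, hcard⟩, ⟨hdisj, fun s hs ↦ ?_⟩, ?_⟩
    · exact disjoint_sdiff.mono_right (hunionP ▸ subset_biUnion_of_mem id hs)
    · rw [hunionP, union_sdiff_of_subset htS]

lemma notMem_of_mem_uniformPartitions_sdiff {t : Finset V} (ht : t.Nonempty)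
    (hP : P ∈ uniformPartitions r (S \ t)) : t ∉ P := by
  intro htP
  obtain ⟨v, hv⟩ := ht
  exact (mem_sdiff.1 (subset_of_mem_uniformPartitions hP htP hv)).2 hv

lemma insert_mem_powersetCard_of_mem_erase (hr : r ≠ 0) {a : V} (ha : a ∈ S) {q : Finset V}
    (hq : q ∈ (S.erase a).powersetCard (r - 1)) : a ∉ q ∧ insert a q ∈ S.powersetCard r := by
  obtain ⟨hqS, hqr⟩ := mem_powersetCard.1 hq
  have haq : a ∉ q := fun h ↦ notMem_erase a S (hqS h)
  refine ⟨haq, mem_powersetCard.2 ⟨insert_subset ha (hqS.trans (erase_subset a S)), ?_⟩⟩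
  rw [card_insert_of_notMem haq, hqr, Nat.sub_add_cancel (Nat.pos_of_ne_zero hr)]

/-- The block containing a fixed element `a` is `insert a q` for some `q`. -/
lemma card_uniformPartitions_eq_sum (hr : r ≠ 0) {a : V} (ha : a ∈ S) :
    #(uniformPartitions r S) =
      ∑ q ∈ (S.erase a).powersetCard (r - 1), #(uniformPartitions r (S \ insert a q)) := by
  have hinsert {q : Finset V} {P : Finset (Finset V)} (hq : q ∈ (S.erase a).powersetCard (r - 1))
      (hP : P ∈ uniformPartitions r (S \ insert a q)) :
      a ∉ q ∧ insert a q ∉ P ∧ insert (insert a q) P ∈ uniformPartitions r S := by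
    obtain ⟨haq, hblock⟩ := insert_mem_powersetCard_of_mem_erase hr ha hq
    obtain ⟨hsub, hcard⟩ := mem_powersetCard.1 hblock
    have hqP := notMem_of_mem_uniformPartitions_sdiff (insert_nonempty a q) hP
    exact ⟨haq, hqP, (insert_mem_uniformPartitions_iff hqP).2 ⟨hcard, hsub, hP⟩⟩
  rw [← card_sigma]
  symm
  refine card_bij (fun x _ ↦ insert (insert a x.1) x.2) ?_ ?_ ?_
  · rintro ⟨q, P⟩ hqP
    exact (hinsert (mem_sigma.1 hqP).1 (mem_sigma.1 hqP).2).2.2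
  · rintro ⟨q, P⟩ hqP ⟨q', P'⟩ hqP' (heq : insert (insert a q) P = insert (insert a q') P')
    simp only [mem_sigma] at hqP hqP'
    obtain ⟨haq, hnotMem, hmem⟩ := hinsert hqP.1 hqP.2
    obtain ⟨haq', hnotMem', -⟩ := hinsert hqP'.1 hqP'.2
    have hblock : insert a q = insert a q' :=
      eq_of_mem_uniformPartitions hmem (mem_insert_self _ P) (heq ▸ mem_insert_self _ P')
        (mem_insert_self a q) (mem_insert_self a q')
    obtain rfl : q = q' := by rw [← erase_insert haq, hblock, erase_insert haq']
    obtain rfl : P = P' := by rw [← erase_insert hnotMem, heq, erase_insert hnotMem']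
    rfl
  · intro P hP
    obtain ⟨t, htP, hat⟩ := exists_mem_block_of_mem_uniformPartitions hP ha
    rw [← insert_erase htP, insert_mem_uniformPartitions_iff (notMem_erase t P)] at hP
    obtain ⟨htr, htS, hP'⟩ := hP
    refine ⟨⟨t.erase a, P.erase t⟩, ?_, ?_⟩
    · rw [mem_sigma, mem_powersetCard, insert_erase hat, card_erase_of_mem hat, htr]
      exact ⟨⟨erase_subset_erase a htS, rfl⟩, hP'⟩
    · simp only [insert_erase hat, insert_erase htP]

lemma card_uniformPartitions (hr : r ≠ 0) {m : ℕ} (hS : #S = m * r) :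
    #(uniformPartitions r S) = Nat.uniformBell m r := by
  induction m generalizing S with
  | zero =>
    obtain rfl : S = ∅ := by simpa using hS
    rw [uniformPartitions_empty hr, card_singleton, Nat.uniformBell_zero_left]
  | succ m ih =>
    rw [add_mul, one_mul] at hS
    obtain ⟨a, ha⟩ : S.Nonempty := card_pos.1 (by lia)
    have hrest : ∀ q ∈ (S.erase a).powersetCard (r - 1), #(S \ insert a q) = m * r := by
      intro q hq
      obtain ⟨hsub, hcard⟩ :=
        mem_powersetCard.1 (insert_mem_powersetCard_of_mem_erase hr ha hq).2
      rw [card_sdiff_of_subset hsub, hcard, hS, Nat.add_sub_cancel]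
    rw [card_uniformPartitions_eq_sum hr ha, sum_const_nat fun q hq ↦ ih (hrest q hq),
      card_powersetCard, card_erase_of_mem ha, hS, Nat.uniformBell_succ_left]

end UniformPartitions

section CliqueUnions

variable {V : Type*} [DecidableEq V] {r : ℕ} {S : Finset V} {P Q : Finset (Finset V)}

/-- The edge set of the union of the complete graphs on the members of `P`. -/
def cliqueUnionEdges (P : Finset (Finset V)) : Finset (Sym2 V) := P.biUnion cliqueEdges

lemma mk_mem_cliqueUnionEdges {u v : V} :
    s(u, v) ∈ cliqueUnionEdges P ↔ ∃ t ∈ P, u ∈ t ∧ v ∈ t ∧ u ≠ v := by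
  simp only [cliqueUnionEdges, mem_biUnion, mk_mem_cliqueEdges]

lemma cliqueUnionEdges_subset (hP : P ∈ uniformPartitions r S) :
    cliqueUnionEdges P ⊆ cliqueEdges S :=
  biUnion_subset.2 fun _ ht ↦ cliqueEdges_mono (subset_of_mem_uniformPartitions hP ht)

lemma card_cliqueUnionEdges (hP : P ∈ uniformPartitions r S) :
    #(cliqueUnionEdges P) = #P * r.choose 2 := by
  obtain ⟨hcard, hdisj, -⟩ := mem_uniformPartitions.1 hP
  have hdisjEdges : (P : Set (Finset V)).PairwiseDisjoint cliqueEdges :=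
    fun s hs t ht hst ↦ disjoint_cliqueEdges (hdisj hs ht hst)
  rw [cliqueUnionEdges, card_biUnion hdisjEdges]
  exact sum_const_nat fun t ht ↦ by rw [card_cliqueEdges, hcard t ht]

lemma subset_of_cliqueUnionEdges_subset (hr : 2 ≤ r) (hP : P ∈ uniformPartitions r S)
    (hQ : Q ∈ uniformPartitions r S) (hPQ : cliqueUnionEdges P ⊆ cliqueUnionEdges Q) : P ⊆ Q := by
  intro s hs
  have hsr := (mem_uniformPartitions.1 hP).1 s hs
  obtain ⟨u, hu⟩ : s.Nonempty := card_pos.1 (by lia)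
  obtain ⟨t, ht, hut⟩ :=
    exists_mem_block_of_mem_uniformPartitions hQ (subset_of_mem_uniformPartitions hP hs hu)
  have hst : s ⊆ t := by
    intro v hv
    rcases eq_or_ne u v with rfl | huv
    · exact hut
    obtain ⟨t', ht', hut', hvt', -⟩ :=
      mk_mem_cliqueUnionEdges.1 (hPQ (mk_mem_cliqueUnionEdges.2 ⟨s, hs, hu, hv, huv⟩))
    rwa [eq_of_mem_uniformPartitions hQ ht ht' hut hut']
  rwa [eq_of_subset_of_card_le hst (by rw [(mem_uniformPartitions.1 hQ).1 t ht, hsr])]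

lemma injOn_cliqueUnionEdges (hr : 2 ≤ r) (S : Finset V) :
    Set.InjOn cliqueUnionEdges (uniformPartitions r S : Set (Finset (Finset V))) := by
  intro P hP Q hQ hPQ
  exact (subset_of_cliqueUnionEdges_subset hr hP hQ hPQ.subset).antisymm
    (subset_of_cliqueUnionEdges_subset hr hQ hP hPQ.superset)

lemma bernoulliProb_image_cliqueUnionEdges {p : ℝ} {m : ℕ} (hr : 2 ≤ r) (hS : #S = m * r)
    {U : Finset (Sym2 V)} (hU : cliqueEdges S ⊆ U) :
    bernoulliProb U p (cliqueUnionEdges '' (uniformPartitions r S : Set (Finset (Finset V)))) =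
      Nat.uniformBell m r * (p ^ (m * r.choose 2) * (1 - p) ^ (#U - m * r.choose 2)) := by
  have hr₀ : r ≠ 0 := by lia
  have hsub : (uniformPartitions r S).image cliqueUnionEdges ⊆ U.powersetCard (m * r.choose 2) := by
    rw [image_subset_iff]
    intro P hP
    have hm : #P = m :=
      Nat.eq_of_mul_eq_mul_right (Nat.pos_of_ne_zero hr₀)
        ((card_mul_of_mem_uniformPartitions hP).trans hS)
    exact mem_powersetCard.2
      ⟨(cliqueUnionEdges_subset hP).trans hU, (card_cliqueUnionEdges hP).trans (by rw [hm])⟩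
  rw [← coe_image, bernoulliProb_of_subset_powersetCard hsub,
    card_image_of_injOn (injOn_cliqueUnionEdges hr S), card_uniformPartitions hr₀ hS]

end CliqueUnions

section RandomGraph

lemma prob_eq_bernoulliProb (n : ℕ) (p : ℝ) (A : Set (SimpleGraph (Fin n))) :
    prob n p A = bernoulliProb (cliqueEdges univ) p
      {E : Finset (Sym2 (Fin n)) | SimpleGraph.fromEdgeSet (E : Set (Sym2 (Fin n))) ∈ A} := by
  let edges (G : SimpleGraph (Fin n)) : Finset (Sym2 (Fin n)) := {e | e ∈ G.edgeSet}
  have fromEdgeSet_edges (G : SimpleGraph (Fin n)) :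
      SimpleGraph.fromEdgeSet (edges G : Set (Sym2 (Fin n))) = G := by
    simp [edges]
  refine sum_nbij' edges (fun E ↦ SimpleGraph.fromEdgeSet (E : Set (Sym2 (Fin n))))
    ?_ (fun _ _ ↦ mem_univ _) (fun G _ ↦ fromEdgeSet_edges G) ?_ ?_
  · intro G _
    rw [mem_powerset]
    rintro ⟨u, v⟩ huv
    exact mk_mem_cliqueEdges.2 ⟨mem_univ u, mem_univ v, G.ne_of_adj (mem_filter.1 huv).2⟩
  · intro E hE
    ext ⟨u, v⟩
    simp only [edges, mem_filter_univ]
    exact fromEdgeSet_adj_iff_mem (mem_powerset.1 hE)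
  · intro G _
    simp only [Set.indicator_apply, Set.mem_ofPred_eq, fromEdgeSet_edges, bernoulliWeight,
      card_cliqueEdges, card_univ, Fintype.card_fin]
    rfl

lemma triangleCount_eq_zero_iff {V : Type*} [Fintype V] {G : SimpleGraph V} :
    triangleCount G = 0 ↔ G.CliqueFree 3 := by
  simp [triangleCount, SimpleGraph.CliqueFree, filter_eq_empty_iff]

/-- The event `𝒯_S` for cliques on `r` vertices in place of triangles: the graph induced on `S` is
a union of vertex-disjoint `r`-cliques covering `S`, and every `r`-clique of the graph has an edge
inside `S`. -/
def disjointCliquesEvent {V : Type*} [DecidableEq V] (r : ℕ) (S : Finset V) :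
    Set (SimpleGraph V) :=
  {H | (∃ P ∈ uniformPartitions r S, ∀ u v, u ∈ S → v ∈ S →
      (H.Adj u v ↔ ∃ t ∈ P, u ∈ t ∧ v ∈ t ∧ u ≠ v)) ∧
    (H.deleteEdges {e | ∀ v ∈ e, v ∈ S}).CliqueFree r}

variable {V : Type*} [DecidableEq V] [Fintype V] {r : ℕ} {S : Finset V}

lemma disjointCliquesEvent_three (S : Finset V) :
    disjointCliquesEvent 3 S =
      {H | (∃ P : Finset (Finset V),
              (∀ t ∈ P, t.card = 3) ∧
              (P : Set (Finset V)).PairwiseDisjoint id ∧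
              P.biUnion id = S ∧
              (∀ u v : V, u ∈ S → v ∈ S →
                (H.Adj u v ↔ ∃ t ∈ P, u ∈ t ∧ v ∈ t ∧ u ≠ v))) ∧
           triangleCount (H.deleteEdges {e : Sym2 V | ∀ v ∈ e, v ∈ S}) = 0} := by
  simp only [disjointCliquesEvent, mem_uniformPartitions, triangleCount_eq_zero_iff, and_assoc]

lemma fromEdgeSet_mem_disjointCliquesEvent {E : Finset (Sym2 V)} (hE : E ⊆ cliqueEdges univ)
    (hS : E ∩ (cliqueEdges univ \ cliqueEdges Sᶜ) ∈
      cliqueUnionEdges '' (uniformPartitions r S : Set (Finset (Finset V))))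
    (hfree : (SimpleGraph.fromEdgeSet (↑(E ∩ cliqueEdges Sᶜ) : Set (Sym2 V))).CliqueFree r) :
    SimpleGraph.fromEdgeSet (E : Set (Sym2 V)) ∈ disjointCliquesEvent r S := by
  obtain ⟨P, hP, hPE⟩ := hS
  have mem_cliqueUnionEdges_iff {e : Sym2 V} :
      e ∈ cliqueUnionEdges P ↔ e ∈ E ∧ e ∉ cliqueEdges Sᶜ := by
    rw [hPE, mem_inter, Finset.mem_sdiff]
    exact and_congr_right fun he ↦ and_iff_right (hE he)
  refine ⟨⟨P, hP, fun u v hu _ ↦ ?_⟩, hfree.anti ?_⟩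
  · have hout : s(u, v) ∉ cliqueEdges Sᶜ := fun h ↦ mem_compl.1 (mk_mem_cliqueEdges.1 h).1 hu
    rw [fromEdgeSet_adj_iff_mem hE, ← mk_mem_cliqueUnionEdges, mem_cliqueUnionEdges_iff,
      and_iff_left hout]
  · intro u v huv
    rw [SimpleGraph.deleteEdges_adj, fromEdgeSet_adj_iff_mem hE] at huv
    obtain ⟨huvE, huvS⟩ := huv
    rw [fromEdgeSet_adj_iff_mem inter_subset_right, mem_inter, and_iff_right huvE]
    by_contra hout
    obtain ⟨hu, hv, -⟩ := mk_mem_cliqueEdges.1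
      (cliqueUnionEdges_subset hP (mem_cliqueUnionEdges_iff.2 ⟨huvE, hout⟩))
    exact huvS (Sym2.ball.2 ⟨hu, hv⟩)

lemma le_prob_disjointCliquesEvent {n m : ℕ} {p : ℝ} (hp₀ : 0 ≤ p) (hp₁ : p ≤ 1) (hr : 2 ≤ r)
    {S : Finset (Fin n)} (hS : #S = m * r) :
    Nat.uniformBell m r *
        (p ^ (m * r.choose 2) *
          (1 - p) ^ ((#S).choose 2 + (n - #S) * #S - m * r.choose 2)) *
        (1 - p ^ r.choose 2) ^ (n - #S).choose r ≤
      prob n p (disjointCliquesEvent r S) := by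
  set W := cliqueEdges Sᶜ
  set U := cliqueEdges univ \ W with hU
  have hWU : U ∪ W = cliqueEdges univ := sdiff_union_of_subset (cliqueEdges_mono (subset_univ _))
  have hSU : cliqueEdges S ⊆ U :=
    subset_sdiff.2 ⟨cliqueEdges_mono (subset_univ _), disjoint_cliqueEdges disjoint_compl_right⟩
  have hcardU : #U = (#S).choose 2 + (n - #S) * #S := by
    rw [hU, card_cliqueEdges_univ_sdiff_compl, Fintype.card_fin]
  have hfree := one_sub_pow_choose_le_bernoulliProb_cliqueFree hp₀ hp₁ hr Sᶜ
  rw [card_compl, Fintype.card_fin] at hfree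
  rw [← hcardU, ← bernoulliProb_image_cliqueUnionEdges hr hS hSU, prob_eq_bernoulliProb, ← hWU]
  refine (mul_le_mul_of_nonneg_left hfree (bernoulliProb_nonneg hp₀ hp₁ _)).trans ?_
  rw [← bernoulliProb_union_inter sdiff_disjoint]
  refine bernoulliProb_mono hp₀ hp₁ fun E hE hEUW ↦ ?_
  exact fromEdgeSet_mem_disjointCliquesEvent (hE.trans hWU.subset) hEUW.1 hEUW.2

end RandomGraph

section Asymptotics

open Real

lemma tendsto_one_sub_div_pow_rpow {r : ℕ} (hr : r ≠ 0) (l : ℝ) :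
    Tendsto (fun n : ℕ ↦ (1 - (l / n) ^ r) ^ ((n : ℝ) ^ r / r.factorial)) atTop
      (nhds (exp (-(l ^ r / r.factorial)))) := by
  have hr₀ : (r.factorial : ℝ) ≠ 0 := by positivity
  have hpow : Tendsto (fun n : ℕ ↦ (n : ℝ) ^ r / r.factorial) atTop atTop :=
    ((tendsto_pow_atTop hr).comp tendsto_natCast_atTop_atTop).atTop_div_const (by positivity)
  refine ((tendsto_one_add_div_rpow_exp (-(l ^ r / r.factorial))).comp hpow).congr fun n ↦ ?_
  rw [Function.comp_apply, neg_div, ← sub_eq_add_neg, div_div_div_cancel_right₀ hr₀, div_pow]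

lemma eventually_mul_exp_le_one_sub_div_pow_choose {c l : ℝ} (hc : c < 1) (hl : 0 ≤ l) {r : ℕ}
    (hr : r ≠ 0) :
    ∀ᶠ n : ℕ in atTop, ∀ m ≤ n,
      c * exp (-(l ^ r / r.factorial)) ≤ (1 - (l / n) ^ r) ^ m.choose r := by
  have hlt : c * exp (-(l ^ r / r.factorial)) < exp (-(l ^ r / r.factorial)) :=
    mul_lt_of_lt_one_left (exp_pos _) hc
  have hsmall : ∀ᶠ n : ℕ in atTop, l / n < 1 :=
    (tendsto_const_div_atTop_nhds_zero_nat l).eventually_lt_const one_pos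
  filter_upwards [(tendsto_one_sub_div_pow_rpow hr l).eventually_const_lt hlt, hsmall]
    with n hn hn₁ m hm
  have hbase : 0 < 1 - (l / n) ^ r := sub_pos.2 (pow_lt_one₀ (by positivity) hn₁ hr)
  have hchoose : (m.choose r : ℝ) ≤ (n : ℝ) ^ r / r.factorial :=
    (Nat.choose_le_pow_div r m).trans (by gcongr)
  calc c * exp (-(l ^ r / r.factorial))
      ≤ (1 - (l / n) ^ r) ^ ((n : ℝ) ^ r / r.factorial) := hn.le
    _ ≤ (1 - (l / n) ^ r) ^ (m.choose r : ℝ) :=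
        rpow_le_rpow_of_exponent_ge hbase (sub_le_self _ (by positivity)) hchoose
    _ = (1 - (l / n) ^ r) ^ m.choose r := rpow_natCast _ _

end Asymptotics

/-- **Only vertex-disjoint triangles: lower bound on `P(𝒯_S)`.** -/
theorem disjoint_triangles_event_bound (l : ℝ) (hl : 0 < l) :
    ∃ n₀ : ℕ, ∀ n ≥ n₀, ∀ k : ℕ, 3 ∣ k → ∀ S : Finset (Fin n), S.card = k →
      (Nat.factorial k : ℝ) / (6 ^ (k / 3) * Nat.factorial (k / 3)) *
            (l / n) ^ k * (1 - l / n) ^ (k.choose 2 - k + (n - k) * k) *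
            (9 / 10) * Real.exp (-(l ^ 3 / 6)) ≤
        prob n (l / n)
          {H | (∃ P : Finset (Finset (Fin n)),
                  (∀ t ∈ P, t.card = 3) ∧
                  (P : Set (Finset (Fin n))).PairwiseDisjoint id ∧
                  P.biUnion id = S ∧
                  (∀ u v : Fin n, u ∈ S → v ∈ S →
                    (H.Adj u v ↔ ∃ t ∈ P, u ∈ t ∧ v ∈ t ∧ u ≠ v))) ∧
               triangleCount (H.deleteEdges {e : Sym2 (Fin n) | ∀ v ∈ e, v ∈ S}) = 0} := by
  have hfact : (Nat.factorial 3 : ℝ) = 6 := by norm_num [Nat.factorial]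
  have hchoose : Nat.choose 3 2 = 3 := rfl
  obtain ⟨n₀, hn₀⟩ := eventually_atTop.1 <|
    (eventually_mul_exp_le_one_sub_div_pow_choose (c := 9 / 10) (by norm_num) hl.le
      three_ne_zero).and
    ((tendsto_const_div_atTop_nhds_zero_nat l).eventually_le_const one_pos)
  refine ⟨n₀, fun n hn k hk S hS ↦ ?_⟩
  obtain ⟨hexp, hp₁⟩ := hn₀ n hn
  have hp₀ : 0 ≤ l / n := by positivity
  have hle : k ≤ k.choose 2 := le_choose_two_of_three_dvd hk
  obtain ⟨m, rfl⟩ := exists_eq_mul_left_of_dvd hk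
  have hmain := le_prob_disjointCliquesEvent hp₀ hp₁ (by norm_num) hS
  rw [hS, hchoose, Nat.sub_add_comm hle, cast_uniformBell three_ne_zero,
    disjointCliquesEvent_three] at hmain
  rw [Nat.mul_div_cancel m three_pos, mul_assoc _ (9 / 10), mul_assoc (_ / _), ← hfact]
  refine le_trans ?_ hmain
  gcongr
  exact hexp _ (Nat.sub_le _ _)
end
end
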